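/- arXiv:2505.10555 — 3 statements merged into one kernel-verified Lean document; each statement's English description precedes it below -/
import Mathlib

section
/- Fix integers r ≥ 3 and n ≥ 1, let G be a GOTE(r,n) tensor and let x₃, x₄, …, x_r ∈ ℝⁿ be unit vectors. Define the contraction L = G·x₃⊗⋯⊗x_r, the random symmetric n×n matrix with entries L_{ij} = Σ_{i₃,…,i_r=1}^n G_{i,j,i₃,…,i_r} (x₃)_{i₃}⋯(x_r)_{i_r}. Then for every ε > 0, P( |λ₁(n^{−1/2}L) − E[λ₁(n^{−1/2}L)]| > ε ) ≤ 2·exp(−nε²/(2r)). -/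
open MeasureTheory ProbabilityTheory Filter

noncomputable section

/-- The size-`r` multiset of entries of a tuple `a : Fin r → Fin n`. -/
def tupleSym {n r : ℕ} (a : Fin r → Fin n) : Sym (Fin n) r :=
  ⟨(List.ofFn a : Multiset (Fin n)), by simp⟩

/-- `#Perm(a)`: the number of tuples with the same multiset of entries as `a`. -/
def permCount {n r : ℕ} (a : Fin r → Fin n) : ℕ :=
  (Finset.univ.filter (fun b : Fin r → Fin n => tupleSym b = tupleSym a)).card

/-- The sample space for a GOTE(r,n) tensor: one standard Gaussian coordinate for each
size-`r` multiset of indices. -/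
abbrev GoteSpace (r n : ℕ) : Type := Sym (Fin n) r → ℝ

/-- The law of the coordinates of a GOTE(r,n) tensor: a product of standard Gaussians. -/
def goteMeasure (r n : ℕ) : Measure (GoteSpace r n) :=
  Measure.pi fun _ => gaussianReal 0 1

instance (r n : ℕ) : IsProbabilityMeasure (goteMeasure r n) := by
  unfold goteMeasure; infer_instance

/-- The entries of the GOTE(r,n) tensor built from the Gaussian coordinates `ω`. -/
def gote {r n : ℕ} (ω : GoteSpace r n) (a : Fin r → Fin n) : ℝ :=
  Real.sqrt ((r : ℝ) / (permCount a : ℝ)) * ω (tupleSym a)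

/-- The index tuple `(i, j, f 0, …, f (r-3))`. -/
def glue {n r : ℕ} (i j : Fin n) (f : Fin (r - 2) → Fin n) : Fin r → Fin n :=
  fun t =>
    if h0 : (t : ℕ) = 0 then i
    else if h1 : (t : ℕ) = 1 then j
    else f ⟨(t : ℕ) - 2, by have := t.isLt; omega⟩

/-- The pure contraction `G ⬝ w^{⊗(r-2)}`, an `n × n` random symmetric matrix. -/
def pureContraction {r n : ℕ} (ω : GoteSpace r n) (w : Fin n → ℝ) :
    Matrix (Fin n) (Fin n) ℝ :=
  fun i j => ∑ f : Fin (r - 2) → Fin n, gote ω (glue i j f) * ∏ k, w (f k)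

open Classical in
/-- The eigenvalues (in some order) of a matrix, defined for symmetric matrices via the
spectral theorem and as `0` otherwise. -/
def eigsOf {n : ℕ} (A : Matrix (Fin n) (Fin n) ℝ) : Fin n → ℝ :=
  if h : A.IsHermitian then h.eigenvalues else 0

/-- The largest eigenvalue `λ₁` of a symmetric matrix. -/
def lambdaMax {n : ℕ} (A : Matrix (Fin n) (Fin n) ℝ) : ℝ := ⨆ i, eigsOf A i

/-- The smallest eigenvalue `λₙ` of a symmetric matrix. -/
def lambdaMin {n : ℕ} (A : Matrix (Fin n) (Fin n) ℝ) : ℝ := ⨅ i, eigsOf A i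

/-- The semicircle distribution with variance `σ²` (parameter `s = σ²`). -/
def semicircle (s : ℝ) : Measure ℝ :=
  volume.withDensity fun x => ENNReal.ofReal (Real.sqrt (4 * s - x ^ 2) / (2 * Real.pi * s))

end

/-- The general (mixed) contraction `G·x₃⊗⋯⊗x_r` of a GOTE(r,n) tensor along the
directions `x k`, `k : Fin (r−2)`. -/
noncomputable def generalContraction {r n : ℕ} (ω : GoteSpace r n)
    (x : Fin (r - 2) → (Fin n → ℝ)) : Matrix (Fin n) (Fin n) ℝ :=
  fun i j => ∑ f : Fin (r - 2) → Fin n, gote ω (glue i j f) * ∏ k, x k (f k)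


namespace GConc

lemma vol_thick (A : Set ℝ) (hne : A.Nonempty) (hb : BddAbove A) (δ : ℝ) (hδ : 0 < δ) :
    volume A + ENNReal.ofReal (2 * δ) ≤ volume {z : ℝ | ∃ a ∈ A, |z - a| < δ} := by
  have key : ∀ δ' : ℝ, 0 < δ' → δ' < δ →
      volume A + ENNReal.ofReal (δ + δ') ≤ volume {z : ℝ | ∃ a ∈ A, |z - a| < δ} := by
    intro δ' h0 h1
    set S := sSup A with hS
    have hd : Disjoint ((fun x => x + δ') ⁻¹' A) (Set.Ioo (S - δ') (S + δ)) := by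
      rw [Set.disjoint_left]
      intro z hz hz2
      have := le_csSup hb hz
      simp only [Set.mem_Ioo] at hz2
      simp only at this
      linarith [hz2.1]
    calc volume A + ENNReal.ofReal (δ + δ')
        = volume ((fun x => x + δ') ⁻¹' A) + volume (Set.Ioo (S - δ') (S + δ)) := by
          rw [measure_preimage_add_right, Real.volume_Ioo]
          congr 2; ring
      _ = volume (((fun x => x + δ') ⁻¹' A) ∪ Set.Ioo (S - δ') (S + δ)) :=
          (measure_union hd measurableSet_Ioo).symm
      _ ≤ _ := by
          apply measure_mono
          rintro z (hz | hz)
          · refine ⟨z + δ', hz, ?_⟩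
            rw [abs_lt]; constructor <;> linarith
          · obtain ⟨a, ha, ha2⟩ := exists_lt_of_lt_csSup hne
              (show max (z - δ) (S - (δ - δ')) < S by
                apply max_lt <;> [linarith [hz.2]; linarith])
            have haS := le_csSup hb ha
            rw [max_lt_iff] at ha2
            refine ⟨a, ha, ?_⟩
            rw [abs_lt]; constructor <;> linarith [hz.1, hz.2]
  have ht : Tendsto (fun δ' : ℝ => volume A + ENNReal.ofReal (δ + δ')) (nhdsWithin δ (Set.Iio δ))
      (nhds (volume A + ENNReal.ofReal (2 * δ))) := by
    rw [two_mul]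
    apply Tendsto.const_add
    apply ENNReal.tendsto_ofReal
    apply Tendsto.mono_left _ nhdsWithin_le_nhds
    exact (continuous_const.add continuous_id).tendsto δ
  refine le_of_tendsto ht ?_
  filter_upwards [Ioo_mem_nhdsLT hδ] with δ' h
  exact key δ' h.1 h.2

lemma core (s : ℝ) (hs0 : 0 < s) (hs1 : s < 1) (U H : ℝ → ℝ)
    (hU : Measurable U) (hH : Measurable H) (hU0 : ∀ x, 0 ≤ U x) (hU1 : ∀ x, U x ≤ 1)
    (hsup : ∀ t < 1, ∃ x, t < U x) (R : ℝ) (hR : ∀ x, U x ≠ 0 → x ≤ R)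
    (hH0 : ∀ x, 0 ≤ H x)
    (hUH : ∀ x y, U x ^ s * Real.exp (-y ^ 2 / 2) ^ (1 - s) ≤ H (s * x + (1 - s) * y)) :
    ENNReal.ofReal s * (∫⁻ x, ENNReal.ofReal (U x))
      + ENNReal.ofReal (1 - s) * ∫⁻ x, ENNReal.ofReal (Real.exp (-x ^ 2 / 2))
      ≤ ∫⁻ x, ENNReal.ofReal (H x) := by
  have hV : Measurable (fun x : ℝ => Real.exp (-x ^ 2 / 2)) := by fun_prop
  rw [lintegral_eq_lintegral_meas_lt volume (.of_forall hU0) hU.aemeasurable,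
    lintegral_eq_lintegral_meas_lt volume (.of_forall hH0) hH.aemeasurable,
    lintegral_eq_lintegral_meas_lt volume (.of_forall fun x => (Real.exp_pos _).le)
      hV.aemeasurable]
  refine (add_le_add (lintegral_const_mul_le _ _) (lintegral_const_mul_le _ _)).trans
    ((le_lintegral_add _ _).trans ?_)
  refine setLIntegral_mono_ae' measurableSet_Ioi (.of_forall ?_)
  intro t ht
  have ht : 0 < t := ht
  by_cases h1 : 1 ≤ t
  · have e1 : {a | t < U a} = ∅ := by
      ext a; simp; linarith [hU1 a]
    have e2 : {a : ℝ | t < Real.exp (-a ^ 2 / 2)} = ∅ := by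
      ext a; simp
      exact (Real.exp_le_one_iff.2 (by nlinarith [sq_nonneg a])).trans h1
    simp [e1, e2]
  · push Not at h1
    set ρ := Real.sqrt (-2 * Real.log t) with hρ
    have hl : Real.log t < 0 := Real.log_neg ht h1
    have hρ0 : 0 < ρ := Real.sqrt_pos.2 (by linarith)
    have e2 : {a : ℝ | t < Real.exp (-a ^ 2 / 2)} = Set.Ioo (-ρ) ρ := by
      ext a
      simp only [Set.mem_ofPred_eq, Set.mem_Ioo]
      rw [← Real.log_lt_iff_lt_exp ht, ← abs_lt, hρ, Real.lt_sqrt (abs_nonneg a), sq_abs]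
      constructor <;> intro h <;> linarith
    have hA : ENNReal.ofReal s * volume {a | t < U a}
        = volume ((fun x => s⁻¹ * x) ⁻¹' {a | t < U a}) := by
      rw [Real.volume_preimage_mul_left (inv_ne_zero hs0.ne'), inv_inv, abs_of_pos hs0]
    rw [e2, Real.volume_Ioo, ← ENNReal.ofReal_mul (by linarith), hA]
    have hth := vol_thick ((fun x => s⁻¹ * x) ⁻¹' {a | t < U a}) (by
        obtain ⟨x, hx⟩ := hsup t h1
        exact ⟨s * x, by simpa [hs0.ne'] using hx⟩) ⟨s * R, by
          intro x hx
          have hx' : t < U (s⁻¹ * x) := hx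
          have := hR _ (ht.trans hx').ne'
          rw [inv_mul_le_iff₀ hs0] at this
          exact this⟩ ((1 - s) * ρ) (by apply mul_pos <;> linarith)
    rw [show (1 - s) * (ρ - -ρ) = 2 * ((1 - s) * ρ) by ring]
    refine hth.trans (measure_mono ?_)
    rintro z ⟨a, ha, haz⟩
    have ha : t < U (s⁻¹ * a) := ha
    have hs1' : 0 < 1 - s := by linarith
    have hy : (1 - s)⁻¹ * (z - a) ∈ {a : ℝ | t < Real.exp (-a ^ 2 / 2)} := by
      rw [e2, Set.mem_Ioo, ← abs_lt, abs_mul, abs_of_pos (inv_pos.2 hs1'), inv_mul_lt_iff₀ hs1']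
      exact haz
    have := hUH (s⁻¹ * a) ((1 - s)⁻¹ * (z - a))
    rw [show s * (s⁻¹ * a) + (1 - s) * ((1 - s)⁻¹ * (z - a)) = z by field_simp; ring] at this
    refine lt_of_lt_of_le ?_ this
    calc t = t ^ s * t ^ (1 - s) := by rw [← Real.rpow_add ht]; simp
      _ < _ := mul_lt_mul'' (Real.rpow_lt_rpow ht.le ha hs0) (Real.rpow_lt_rpow ht.le hy hs1')
          (by positivity) (by positivity)

lemma gauss_vol (g : ℝ → ℝ) (hg : Measurable g) :
    ∫⁻ x, ENNReal.ofReal (g x * Real.exp (-x ^ 2 / 2))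
      = ENNReal.ofReal (√(2 * Real.pi)) * ∫⁻ x, ENNReal.ofReal (g x) ∂(gaussianReal 0 1) := by
  rw [gaussianReal_of_var_ne_zero _ one_ne_zero,
    lintegral_withDensity_eq_lintegral_mul _ (by fun_prop) (by fun_prop),
    ← lintegral_const_mul _ (by fun_prop)]
  congr 1; ext x
  simp only [Pi.mul_apply, gaussianPDF, gaussianPDFReal]
  rw [← ENNReal.ofReal_mul (by positivity), ← ENNReal.ofReal_mul (by positivity)]
  congr 1
  have : √(2 * Real.pi) ≠ 0 := by positivity
  simp
  field_simp

lemma pl_real (s : ℝ) (hs0 : 0 < s) (hs1 : s < 1) (u h : ℝ → ℝ)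
    (hu : Measurable u) (hh : Measurable h) (hu0 : ∀ x, 0 ≤ u x) (N : ℝ) (huN : ∀ x, u x ≤ N)
    (R : ℝ) (hR : ∀ x, u x ≠ 0 → x ≤ R) (hh0 : ∀ x, 0 ≤ h x)
    (huh : ∀ x z, u x ^ s ≤ h z * Real.exp (s * (x - z) ^ 2 / (2 * (1 - s)))) :
    (∫⁻ x, ENNReal.ofReal (u x) ∂(gaussianReal 0 1)) ^ s
      ≤ ∫⁻ x, ENNReal.ofReal (h x) ∂(gaussianReal 0 1) := by
  have hs1' : 0 < 1 - s := by linarith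
  by_cases hz : ∀ x, u x = 0
  · simp [hz, hs0]
  push Not at hz
  obtain ⟨x0, hx0⟩ := hz
  set W : ℝ → ℝ := fun x => u x * Real.exp (-x ^ 2 / 2) with hW
  have hWb : BddAbove (Set.range W) := by
    refine ⟨N, ?_⟩
    rintro _ ⟨x, rfl⟩
    have : Real.exp (-x ^ 2 / 2) ≤ 1 := Real.exp_le_one_iff.2 (by nlinarith [sq_nonneg x])
    nlinarith [hu0 x, huN x]
  set M := ⨆ x, W x with hM
  have hMle : ∀ x, W x ≤ M := fun x => le_ciSup hWb x
  have hM0 : 0 < M := lt_of_lt_of_le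
    (mul_pos (lt_of_le_of_ne (hu0 x0) (Ne.symm hx0)) (Real.exp_pos _)) (hMle x0)
  have hc := core s hs0 hs1 (fun x => (u x / M) * Real.exp (-x ^ 2 / 2))
    (fun x => (h x / M ^ s) * Real.exp (-x ^ 2 / 2)) (by fun_prop) (by fun_prop)
    (fun x => by have := hu0 x; positivity)
    (fun x => by
      have := hMle x
      rw [div_mul_eq_mul_div, div_le_one hM0]; exact this)
    (fun t ht => by
      obtain ⟨x, hx⟩ := exists_lt_of_lt_ciSup (show t * M < ⨆ x, W x by rw [← hM]; nlinarith)
      refine ⟨x, ?_⟩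
      rw [div_mul_eq_mul_div, lt_div_iff₀ hM0]; exact hx)
    R (fun x hx => hR x (by rintro h; simp [h] at hx))
    (fun x => by have := hh0 x; positivity)
    (fun x y => by
      have h1 := huh x (s * x + (1 - s) * y)
      rw [Real.mul_rpow (by have := hu0 x; positivity) (by positivity),
        Real.div_rpow (hu0 x) hM0.le, ← Real.exp_mul, ← Real.exp_mul]
      calc u x ^ s / M ^ s * Real.exp (-x ^ 2 / 2 * s) * Real.exp (-y ^ 2 / 2 * (1 - s))
          ≤ (h (s * x + (1 - s) * y) * Real.exp (s * (x - (s * x + (1 - s) * y)) ^ 2 / (2 * (1 - s))))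
            / M ^ s * Real.exp (-x ^ 2 / 2 * s) * Real.exp (-y ^ 2 / 2 * (1 - s)) := by gcongr
        _ = h (s * x + (1 - s) * y) / M ^ s *
            (Real.exp (s * (x - (s * x + (1 - s) * y)) ^ 2 / (2 * (1 - s)))
             * Real.exp (-x ^ 2 / 2 * s) * Real.exp (-y ^ 2 / 2 * (1 - s))) := by ring
        _ = _ := by
            rw [← Real.exp_add, ← Real.exp_add]
            congr 2
            field_simp
            ring)
  have hV := gauss_vol (fun _ => 1) (by fun_prop)
  simp only [one_mul, ENNReal.ofReal_one, lintegral_const, measure_univ, mul_one] at hV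
  rw [hV, gauss_vol (fun x => u x / M) (by fun_prop),
    gauss_vol (fun x => h x / M ^ s) (by fun_prop)] at hc
  have hI : ∫⁻ x, ENNReal.ofReal (u x / M) ∂(gaussianReal 0 1)
      = ENNReal.ofReal M⁻¹ * ∫⁻ x, ENNReal.ofReal (u x) ∂(gaussianReal 0 1) := by
    rw [← lintegral_const_mul _ (by fun_prop)]
    congr 1; ext x
    rw [← ENNReal.ofReal_mul (by positivity), div_eq_inv_mul]
  have hJ : ∫⁻ x, ENNReal.ofReal (h x / M ^ s) ∂(gaussianReal 0 1)
      = ENNReal.ofReal (M ^ s)⁻¹ * ∫⁻ x, ENNReal.ofReal (h x) ∂(gaussianReal 0 1) := by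
    rw [← lintegral_const_mul _ (by fun_prop)]
    congr 1; ext x
    rw [← ENNReal.ofReal_mul (by positivity), div_eq_inv_mul]
  rw [hI, hJ] at hc
  set I := ∫⁻ x, ENNReal.ofReal (u x) ∂(gaussianReal 0 1) with hIdef
  set J := ∫⁻ x, ENNReal.ofReal (h x) ∂(gaussianReal 0 1) with hJdef
  by_cases hJt : J = ⊤
  · rw [hJt]; exact le_top
  have hIt : I ≠ ⊤ := by
    have : I ≤ ENNReal.ofReal N := by
      calc I ≤ ∫⁻ x, ENNReal.ofReal N ∂(gaussianReal 0 1) :=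
            lintegral_mono fun x => ENNReal.ofReal_le_ofReal (huN x)
        _ = _ := by simp
    exact ne_top_of_le_ne_top ENNReal.ofReal_ne_top this
  lift I to NNReal using hIt with I'
  lift J to NNReal using hJt with J'
  have hc' := ENNReal.toReal_mono (by finiteness) hc
  rw [ENNReal.toReal_add (by finiteness) (by finiteness)] at hc'
  simp only [ENNReal.toReal_mul, ENNReal.coe_toReal] at hc'
  rw [ENNReal.toReal_ofReal hs0.le, ENNReal.toReal_ofReal (by positivity),
    ENNReal.toReal_ofReal (by positivity), ENNReal.toReal_ofReal (by positivity),
    ENNReal.toReal_ofReal (by positivity)] at hc'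
  have hp : 0 < √(2 * Real.pi) := by positivity
  have hc2 : s * (M⁻¹ * I') + (1 - s) * 1 ≤ (M ^ s)⁻¹ * J' := by
    refine le_of_mul_le_mul_left ?_ hp
    linarith
  have hag := Real.geom_mean_le_arith_mean2_weighted hs0.le hs1'.le
    (show 0 ≤ M⁻¹ * (I' : ℝ) by positivity) zero_le_one (by ring)
  rw [Real.one_rpow, mul_one, Real.mul_rpow (by positivity) (by positivity),
    Real.inv_rpow hM0.le] at hag
  have : (I' : ℝ) ^ s ≤ J' := by
    refine le_of_mul_le_mul_left (hag.trans hc2) (by positivity)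
  rw [← ENNReal.coe_rpow_of_nonneg _ hs0.le]
  exact_mod_cast this

end GConc

namespace GConc

lemma pl_enn (s : ℝ) (hs0 : 0 < s) (hs1 : s < 1) (u h : ℝ → ENNReal)
    (hu : Measurable u) (hh : Measurable h)
    (huh : ∀ x z, u x ^ s ≤ h z * ENNReal.ofReal (Real.exp (s * (x - z) ^ 2 / (2 * (1 - s))))) :
    (∫⁻ x, u x ∂(gaussianReal 0 1)) ^ s ≤ ∫⁻ x, h x ∂(gaussianReal 0 1) := by
  have hs1' : 0 < 1 - s := by linarith
  set uN : ℕ → ℝ → ENNReal := fun N => Set.indicator (Set.Icc (-N : ℝ) N) (fun x => min (u x) N)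
    with huN
  have huNle : ∀ N x, uN N x ≤ N := fun N x => Set.indicator_apply_le' (fun _ => min_le_right _ _)
    (fun _ => zero_le)
  have huNle2 : ∀ N x, uN N x ≤ u x := fun N x => Set.indicator_apply_le' (fun _ => min_le_left _ _)
    (fun _ => zero_le)
  have huNm : ∀ N, Measurable (uN N) := fun N =>
    (hu.min measurable_const).indicator measurableSet_Icc
  have step : ∀ N, (∫⁻ x, uN N x ∂(gaussianReal 0 1)) ^ s ≤ ∫⁻ x, h x ∂(gaussianReal 0 1) := by
    intro N
    have hNs : ((N : ENNReal) ^ s) ≠ ⊤ := by finiteness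
    have hut : ∀ x, uN N x ≠ ⊤ := fun x => ne_top_of_le_ne_top (by finiteness) (huNle N x)
    have hht : ∀ x, min (h x) ((N : ENNReal) ^ s) ≠ ⊤ := fun x =>
      ne_top_of_le_ne_top hNs (min_le_right _ _)
    have := pl_real s hs0 hs1 (fun x => (uN N x).toReal)
      (fun x => (min (h x) ((N : ENNReal) ^ s)).toReal) (huNm N).ennreal_toReal
      (hh.min measurable_const).ennreal_toReal (fun x => ENNReal.toReal_nonneg) N
      (fun x => by simpa using ENNReal.toReal_mono (by finiteness) (huNle N x))
      N (fun x hx => by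
        by_contra hc
        apply hx
        simp only [huN]
        rw [Set.indicator_of_notMem]
        · simp
        · intro h; exact hc h.2)
      (fun x => ENNReal.toReal_nonneg)
      (fun x z => by
        have h1 : uN N x ^ s ≤ min (h z) ((N : ENNReal) ^ s) *
            ENNReal.ofReal (Real.exp (s * (x - z) ^ 2 / (2 * (1 - s)))) := by
          rcases le_total (h z) ((N : ENNReal) ^ s) with hle | hle
          · rw [min_eq_left hle]
            exact (ENNReal.rpow_le_rpow (huNle2 N x) hs0.le).trans (huh x z)
          · rw [min_eq_right hle]
            refine (ENNReal.rpow_le_rpow (huNle N x) hs0.le).trans ?_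
            refine le_mul_of_one_le_right zero_le ?_
            rw [ENNReal.one_le_ofReal, Real.one_le_exp_iff]
            positivity
        have := ENNReal.toReal_mono (ENNReal.mul_ne_top (hht z) (by finiteness)) h1
        rwa [← ENNReal.toReal_rpow, ENNReal.toReal_mul,
          ENNReal.toReal_ofReal (Real.exp_pos _).le] at this)
    simp only [ENNReal.ofReal_toReal (hut _), ENNReal.ofReal_toReal (hht _)] at this
    exact this.trans (lintegral_mono fun x => min_le_left _ _)
  have hlim : Tendsto (fun N => ∫⁻ x, uN N x ∂(gaussianReal 0 1)) atTop
      (nhds (∫⁻ x, u x ∂(gaussianReal 0 1))) := by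
    apply lintegral_tendsto_of_tendsto_of_monotone (fun N => (huNm N).aemeasurable)
    · refine .of_forall fun x N N' hNN => ?_
      have hc : (N : ℝ) ≤ N' := by exact_mod_cast hNN
      have hc' : (N : ENNReal) ≤ N' := by exact_mod_cast hNN
      refine Set.indicator_apply_le' (fun hx => ?_) (fun _ => zero_le)
      have : x ∈ Set.Icc (-N' : ℝ) N' := ⟨by linarith [hx.1], by linarith [hx.2]⟩
      simp only [huN]
      rw [Set.indicator_of_mem this]
      exact min_le_min le_rfl hc'
    · refine .of_forall fun x => ?_
      have h1 : Tendsto (fun N : ℕ => min (u x) (N : ENNReal)) atTop (nhds (min (u x) ⊤)) :=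
        tendsto_const_nhds.min ENNReal.tendsto_nat_nhds_top
      rw [min_top_right] at h1
      refine h1.congr' ?_
      obtain ⟨N0, hN0⟩ := exists_nat_ge |x|
      filter_upwards [eventually_ge_atTop N0] with N hN
      have : (N0 : ℝ) ≤ N := by exact_mod_cast hN
      simp only [huN]
      rw [Set.indicator_of_mem]
      exact abs_le.1 (hN0.trans this)
  exact le_of_tendsto' ((ENNReal.continuous_rpow_const.tendsto _).comp hlim) step

lemma lintegral_fin_succ (d : ℕ) (f : (Fin (d + 1) → ℝ) → ENNReal) (hf : Measurable f) :
    ∫⁻ x, f x ∂(Measure.pi fun _ => gaussianReal 0 1)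
      = ∫⁻ a, ∫⁻ b, f (Fin.cons a b) ∂(Measure.pi fun _ : Fin d => gaussianReal 0 1)
          ∂(gaussianReal 0 1) := by
  have h := (measurePreserving_piFinSuccAbove (fun _ : Fin (d + 1) => gaussianReal 0 1) 0).symm
  rw [← h.lintegral_comp hf, lintegral_prod]
  · refine lintegral_congr fun a => lintegral_congr fun b => ?_
    congr 1
    simp [MeasurableEquiv.piFinSuccAbove]
    rfl
  · exact (hf.comp (MeasurableEquiv.measurable _)).aemeasurable

lemma measurable_cons (d : ℕ) :
    Measurable (fun p : ℝ × (Fin d → ℝ) => (Fin.cons p.1 p.2 : Fin (d + 1) → ℝ)) := by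
  rw [measurable_pi_iff]
  intro i
  refine Fin.cases ?_ (fun j => ?_) i
  · simpa using measurable_fst
  · simp only [Fin.cons_succ]; fun_prop

lemma pl_fin (s : ℝ) (hs0 : 0 < s) (hs1 : s < 1) (d : ℕ) : ∀ (u h : (Fin d → ℝ) → ENNReal)
    (_ : Measurable u) (_ : Measurable h)
    (_ : ∀ x z, u x ^ s ≤ h z *
      ENNReal.ofReal (Real.exp (s * (∑ i, (x i - z i) ^ 2) / (2 * (1 - s))))),
    (∫⁻ x, u x ∂(Measure.pi fun _ => gaussianReal 0 1)) ^ s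
      ≤ ∫⁻ x, h x ∂(Measure.pi fun _ => gaussianReal 0 1) := by
  induction d with
  | zero =>
    intro u h hu hh huh
    rw [Measure.pi_of_empty, lintegral_dirac' _ hu, lintegral_dirac' _ hh]
    simpa using huh isEmptyElim isEmptyElim
  | succ d ih =>
    intro u h hu hh huh
    rw [lintegral_fin_succ d u hu, lintegral_fin_succ d h hh]
    have hu' : Measurable fun p : ℝ × (Fin d → ℝ) => u (Fin.cons p.1 p.2) :=
      hu.comp (measurable_cons d)
    have hh' : Measurable fun p : ℝ × (Fin d → ℝ) => h (Fin.cons p.1 p.2) :=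
      hh.comp (measurable_cons d)
    refine pl_enn s hs0 hs1 _ _ hu'.lintegral_prod_right' hh'.lintegral_prod_right' ?_
    intro a c
    have hha : Measurable fun b : Fin d → ℝ => h (Fin.cons c b) :=
      hh'.comp measurable_prodMk_left
    rw [← lintegral_mul_const _ hha]
    refine ih (fun b => u (Fin.cons a b)) _ (hu'.comp measurable_prodMk_left)
      (hha.mul_const _) ?_
    intro x z
    refine (huh (Fin.cons a x) (Fin.cons c z)).trans (le_of_eq ?_)
    rw [mul_assoc, ← ENNReal.ofReal_mul (Real.exp_pos _).le, ← Real.exp_add, Fin.sum_univ_succ]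
    simp only [Fin.cons_zero, Fin.cons_succ]
    congr 3
    ring

lemma pl_pi (s : ℝ) (hs0 : 0 < s) (hs1 : s < 1) {ι : Type*} [Fintype ι] (u h : (ι → ℝ) → ENNReal)
    (hu : Measurable u) (hh : Measurable h)
    (huh : ∀ x z, u x ^ s ≤ h z *
      ENNReal.ofReal (Real.exp (s * (∑ i, (x i - z i) ^ 2) / (2 * (1 - s))))) :
    (∫⁻ x, u x ∂(Measure.pi fun _ => gaussianReal 0 1)) ^ s
      ≤ ∫⁻ x, h x ∂(Measure.pi fun _ => gaussianReal 0 1) := by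
  have e := (Fintype.equivFin ι).symm
  have hp := measurePreserving_piCongrLeft (fun _ : ι => gaussianReal 0 1) e
  rw [← hp.lintegral_comp hu, ← hp.lintegral_comp hh]
  refine pl_fin s hs0 hs1 _ (fun a => u (MeasurableEquiv.piCongrLeft (fun _ => ℝ) e a))
    (fun a => h (MeasurableEquiv.piCongrLeft (fun _ => ℝ) e a))
    (hu.comp (MeasurableEquiv.measurable _)) (hh.comp (MeasurableEquiv.measurable _)) ?_
  intro x z
  refine (huh (MeasurableEquiv.piCongrLeft (fun _ => ℝ) e x)
    (MeasurableEquiv.piCongrLeft (fun _ => ℝ) e z)).trans (le_of_eq ?_)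
  rw [← e.sum_comp]
  have hx : ∀ (y : Fin (Fintype.card ι) → ℝ) i,
      (MeasurableEquiv.piCongrLeft (fun _ => ℝ) e y) (e i) = y i := fun y i =>
    Equiv.piCongrLeft_apply_apply (fun _ => ℝ) e y i
  simp only [hx]

lemma integrable_exp_lip {ι : Type*} [Fintype ι] (F : (ι → ℝ) → ℝ) (hF : Measurable F) (L : ℝ)
    (hL : 0 ≤ L) (hlip : ∀ x z, F x - F z ≤ L * √(∑ i, (x i - z i) ^ 2)) (t : ℝ) :
    Integrable (fun x => Real.exp (t * F x)) (Measure.pi fun _ => gaussianReal 0 1) := by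
  have h1 : Integrable (fun x : ℝ => Real.exp (|t| * L * |x|)) (gaussianReal 0 1) :=
    integrable_exp_mul_abs (integrable_exp_mul_gaussianReal _)
      (integrable_exp_mul_gaussianReal _)
  have h2 := (Integrable.fintype_prod (ι := ι) (f := fun _ x => Real.exp (|t| * L * |x|))
    (μ := fun _ => gaussianReal 0 1) (fun _ => h1)).const_mul (Real.exp (|t| * |F 0|))
  refine h2.mono' (by fun_prop) (.of_forall fun x => ?_)
  rw [Real.norm_eq_abs, abs_of_pos (Real.exp_pos _), ← Real.exp_sum, ← Real.exp_add,
    Real.exp_le_exp, ← Finset.mul_sum]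
  have hs : ∀ y : ι → ℝ, √(∑ i, y i ^ 2) ≤ ∑ i, |y i| := by
    intro y
    rw [Real.sqrt_le_left (Finset.sum_nonneg fun i _ => abs_nonneg _)]
    simp_rw [← sq_abs (y _)]
    exact Finset.sum_sq_le_sq_sum_of_nonneg fun i _ => abs_nonneg _
  have a1 := hlip x 0
  have a2 := hlip 0 x
  simp only [Pi.zero_apply, sub_zero, zero_sub, even_two.neg_pow] at a1 a2
  have a3 := mul_le_mul_of_nonneg_left (hs x) hL
  have a4 : |F x| ≤ |F 0| + L * ∑ i, |x i| := by
    have := abs_le.1 (le_refl |F 0|)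
    rw [abs_le]; constructor <;> linarith [this.1, this.2]
  calc t * F x ≤ |t| * |F x| := by rw [← abs_mul]; exact le_abs_self _
    _ ≤ |t| * (|F 0| + L * ∑ i, |x i|) := by gcongr
    _ = _ := by ring

lemma subgauss {ι : Type*} [Fintype ι] (F : (ι → ℝ) → ℝ) (hF : Measurable F) (L : ℝ)
    (hL : 0 ≤ L) (hlip : ∀ x z, F x - F z ≤ L * √(∑ i, (x i - z i) ^ 2)) (t : ℝ) :
    mgf F (Measure.pi fun _ => gaussianReal 0 1) t
      ≤ Real.exp (t * (∫ x, F x ∂(Measure.pi fun _ => gaussianReal 0 1)) + L ^ 2 * t ^ 2 / 2) := by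
  set γ := (Measure.pi fun _ : ι => gaussianReal 0 1) with hγ
  have hexpi := integrable_exp_lip F hF L hL hlip
  have hset : integrableExpSet F γ = Set.univ := by
    ext t; simp only [Set.mem_univ, iff_true]; exact hexpi t
  have key : ∀ s, 0 < s → s < 1 → cgf F γ t - L ^ 2 * t ^ 2 * (1 - s) / 2 ≤ s⁻¹ * cgf F γ (s * t) := by
    intro s hs0 hs1
    have hs1' : 0 < 1 - s := by linarith
    have h := pl_pi s hs0 hs1
      (fun x => ENNReal.ofReal (Real.exp (t * F x - L ^ 2 * t ^ 2 * (1 - s) / 2)))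
      (fun x => ENNReal.ofReal (Real.exp (s * t * F x))) (by fun_prop) (by fun_prop) (by
        intro x z
        rw [ENNReal.ofReal_rpow_of_nonneg (Real.exp_pos _).le hs0.le,
          ← ENNReal.ofReal_mul (Real.exp_pos _).le, ← Real.exp_mul, ← Real.exp_add]
        apply ENNReal.ofReal_le_ofReal
        rw [Real.exp_le_exp]
        set D := √(∑ i, (x i - z i) ^ 2) with hD
        have hDsq : ∑ i, (x i - z i) ^ 2 = D ^ 2 :=
          (Real.sq_sqrt (Finset.sum_nonneg fun i _ => sq_nonneg _)).symm
        rw [hDsq]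
        have b1 : t * (F x - F z) ≤ |t| * (L * D) := by
          refine (le_abs_self _).trans ?_
          rw [abs_mul]
          refine mul_le_mul_of_nonneg_left ?_ (abs_nonneg _)
          rw [abs_le]
          have e1 := hlip x z
          have e2 := hlip z x
          have e3 : ∑ i, (z i - x i) ^ 2 = ∑ i, (x i - z i) ^ 2 :=
            Finset.sum_congr rfl fun i _ => by ring
          rw [e3] at e2
          constructor <;> linarith
        have b2 : |t| * (L * D) ≤ L ^ 2 * t ^ 2 * (1 - s) / 2 + D ^ 2 / (2 * (1 - s)) := by
          rw [← sq_abs t]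
          have : 0 ≤ (L * |t| * (1 - s) - D) ^ 2 / (2 * (1 - s)) := by positivity
          have e : (L * |t| * (1 - s) - D) ^ 2 / (2 * (1 - s))
            = L ^ 2 * |t| ^ 2 * (1 - s) / 2 + D ^ 2 / (2 * (1 - s)) - |t| * (L * D) := by
            field_simp; ring
          linarith
        have b3 := mul_le_mul_of_nonneg_left (b1.trans b2) hs0.le
        have e : s * D ^ 2 / (2 * (1 - s)) = s * (D ^ 2 / (2 * (1 - s))) := by ring
        rw [e]
        linarith)
    rw [← ofReal_integral_eq_lintegral_ofReal _ (.of_forall fun x => (Real.exp_pos _).le),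
      ← ofReal_integral_eq_lintegral_ofReal (hexpi _) (.of_forall fun x => (Real.exp_pos _).le),
      ENNReal.ofReal_rpow_of_nonneg (integral_nonneg fun x => (Real.exp_pos _).le) hs0.le,
      ENNReal.ofReal_le_ofReal_iff (integral_nonneg fun x => (Real.exp_pos _).le)] at h
    · simp_rw [sub_eq_add_neg, Real.exp_add] at h
      rw [integral_mul_const] at h
      change (mgf F γ t * _) ^ s ≤ mgf F γ (s * t) at h
      have hp : 0 < mgf F γ t := mgf_pos (hexpi t)
      have := Real.log_le_log (by positivity) h
      rw [Real.log_rpow (by positivity), Real.log_mul hp.ne' (Real.exp_pos _).ne', Real.log_exp]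
        at this
      rw [le_inv_mul_iff₀ hs0]
      exact this
    · simp_rw [sub_eq_add_neg, Real.exp_add]
      exact (hexpi t).mul_const _
  have h0 : (0 : ℝ) ∈ interior (integrableExpSet F γ) := by simp [hset]
  have hd : HasDerivAt (cgf F γ) (∫ x, F x ∂γ) 0 := by
    have := (analyticAt_cgf h0).differentiableAt.hasDerivAt
    rw [deriv_cgf_zero h0] at this
    simpa using this
  have hd2 : HasDerivAt (fun s => cgf F γ (s * t)) ((∫ x, F x ∂γ) * t) 0 := by
    have e : HasDerivAt (fun s : ℝ => s * t) t 0 := by simpa using (hasDerivAt_id (0 : ℝ)).mul_const t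
    have hd' : HasDerivAt (cgf F γ) (∫ x, F x ∂γ) ((fun s : ℝ => s * t) 0) := by simpa using hd
    exact HasDerivAt.comp (h₂ := cgf F γ) 0 hd' e
  have hlim := hd2.tendsto_slope_zero_right
  simp only [zero_add, zero_mul, cgf_zero, sub_zero, smul_eq_mul] at hlim
  have hlim2 : Tendsto (fun s : ℝ => cgf F γ t - L ^ 2 * t ^ 2 * (1 - s) / 2)
      (nhdsWithin 0 (Set.Ioi 0)) (nhds (cgf F γ t - L ^ 2 * t ^ 2 * (1 - 0) / 2)) := by
    apply Tendsto.mono_left _ nhdsWithin_le_nhds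
    apply Continuous.tendsto (f := fun s : ℝ => cgf F γ t - L ^ 2 * t ^ 2 * (1 - s) / 2)
    fun_prop
  have hfin := le_of_tendsto_of_tendsto hlim2 hlim (by
    filter_upwards [Ioo_mem_nhdsGT (zero_lt_one' ℝ)] with s hs
    exact key s hs.1 hs.2)
  have hp : 0 < mgf F γ t := mgf_pos (hexpi t)
  rw [← Real.log_le_iff_le_exp hp]
  change cgf F γ t ≤ _
  linarith

lemma cont_lip {ι : Type*} [Fintype ι] (F : (ι → ℝ) → ℝ) (L : ℝ)
    (hlip : ∀ x z, F x - F z ≤ L * √(∑ i, (x i - z i) ^ 2)) : Continuous F := by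
  rw [continuous_iff_continuousAt]
  intro z
  rw [ContinuousAt, tendsto_iff_dist_tendsto_zero]
  have h : Tendsto (fun x : ι → ℝ => L * √(∑ i, (x i - z i) ^ 2)) (nhds z) (nhds 0) := by
    have : Continuous (fun x : ι → ℝ => L * √(∑ i, (x i - z i) ^ 2)) := by fun_prop
    simpa using this.tendsto z
  refine squeeze_zero (fun _ => dist_nonneg) (fun x => ?_) h
  rw [Real.dist_eq, abs_le]
  have e1 := hlip x z
  have e2 := hlip z x
  have e3 : ∑ i, (z i - x i) ^ 2 = ∑ i, (x i - z i) ^ 2 :=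
    Finset.sum_congr rfl fun i _ => by ring
  rw [e3] at e2
  constructor <;> linarith

lemma gauss_conc {ι : Type*} [Fintype ι] (F : (ι → ℝ) → ℝ) (hF : Measurable F) (L : ℝ)
    (hL : 0 ≤ L) (hlip : ∀ x z, F x - F z ≤ L * √(∑ i, (x i - z i) ^ 2)) (ε : ℝ) (hε : 0 < ε) :
    (Measure.pi fun _ => gaussianReal 0 1)
      {x | ε < |F x - ∫ y, F y ∂(Measure.pi fun _ => gaussianReal 0 1)|}
      ≤ ENNReal.ofReal (2 * Real.exp (- ε ^ 2 / (2 * L ^ 2))) := by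
  set γ := (Measure.pi fun _ : ι => gaussianReal 0 1) with hγ
  set m := ∫ y, F y ∂γ with hm
  have hexpi := integrable_exp_lip F hF L hL hlip
  have hsg : HasSubgaussianMGF (fun x => F x - m) ⟨L ^ 2, by positivity⟩ γ := by
    refine ⟨fun t => ?_, fun t => ?_⟩
    · simp_rw [mul_sub, sub_eq_add_neg, Real.exp_add]
      exact (hexpi t).mul_const _
    · simp_rw [mgf, mul_sub, sub_eq_add_neg, Real.exp_add]
      rw [integral_mul_const]
      have := subgauss F hF L hL hlip t
      rw [mgf, ← hγ, ← hm] at this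
      calc _ ≤ Real.exp (t * m + L ^ 2 * t ^ 2 / 2) * Real.exp (-(t * m)) := by gcongr
        _ = _ := by rw [← Real.exp_add]; congr 1; change _ = L ^ 2 * t ^ 2 / 2; ring
  have h1 := hsg.measure_ge_le hε.le
  have h2 := hsg.neg.measure_ge_le hε.le
  simp only [Pi.neg_apply] at h1 h2
  calc γ {x | ε < |F x - m|} ≤ γ ({x | ε ≤ F x - m} ∪ {x | ε ≤ -(F x - m)}) := by
        apply measure_mono
        intro x hx
        rcases lt_abs.1 (show ε < |F x - m| from hx) with h | h
        · exact Or.inl h.le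
        · exact Or.inr h.le
    _ ≤ γ {x | ε ≤ F x - m} + γ {x | ε ≤ -(F x - m)} := measure_union_le _ _
    _ ≤ ENNReal.ofReal (Real.exp (- ε ^ 2 / (2 * L ^ 2)))
        + ENNReal.ofReal (Real.exp (- ε ^ 2 / (2 * L ^ 2))) := by
        refine add_le_add ?_ ?_
        · rw [← ENNReal.ofReal_toReal (measure_ne_top γ _)]
          exact ENNReal.ofReal_le_ofReal h1
        · rw [← ENNReal.ofReal_toReal (measure_ne_top γ _)]
          exact ENNReal.ofReal_le_ofReal h2
    _ = _ := by
        rw [← ENNReal.ofReal_add (by positivity) (by positivity)]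
        congr 1; ring

end GConc

namespace GConc

lemma tupleSym_glue (n r : ℕ) (hr : 3 ≤ r) (i j : Fin n) (f : Fin (r - 2) → Fin n) :
    tupleSym (glue i j f : Fin r → Fin n) = tupleSym (glue j i f) := by
  apply Subtype.ext
  simp only [tupleSym, Multiset.coe_eq_coe]
  have h : (glue i j f : Fin r → Fin n)
      = (glue j i f) ∘ (Equiv.swap (⟨0, by omega⟩ : Fin r) ⟨1, by omega⟩) := by
    funext t
    simp only [Function.comp, Equiv.swap_apply_def]
    split_ifs with h0 h1
    · simp [h0, glue]
    · simp [h1, glue]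
    · rw [Fin.ext_iff] at h0 h1
      simp only at h0 h1
      simp [glue, h0, h1]
  rw [h]
  exact Equiv.Perm.ofFn_comp_perm _ _

lemma gote_glue (n r : ℕ) (hr : 3 ≤ r) (ω : GoteSpace r n) (i j : Fin n)
    (f : Fin (r - 2) → Fin n) : gote ω (glue i j f) = gote ω (glue j i f) := by
  simp only [gote, permCount, tupleSym_glue n r hr i j f]

lemma herm (n r : ℕ) (hr : 3 ≤ r) (ω : GoteSpace r n) (x : Fin (r - 2) → (Fin n → ℝ)) (c : ℝ) :
    (c • generalContraction ω x).IsHermitian := by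
  apply Matrix.IsHermitian.ext
  intro i j
  simp [generalContraction, gote_glue n r hr ω i j]

lemma glue_inj (n r : ℕ) (hr : 3 ≤ r) : Function.Injective
    (fun p : Fin n × Fin n × (Fin (r - 2) → Fin n) => (glue p.1 p.2.1 p.2.2 : Fin r → Fin n)) := by
  rintro ⟨i, j, f⟩ ⟨i', j', f'⟩ h
  have h0 := congrFun h ⟨0, by omega⟩
  have h1 := congrFun h ⟨1, by omega⟩
  simp only [glue] at h0 h1
  simp only [dite_true] at h0
  simp only [one_ne_zero, dite_true, dite_false] at h1
  have h2 : f = f' := by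
    funext k
    have := congrFun h ⟨k + 2, by omega⟩
    simpa [glue] using this
  rw [h0, h1, h2]

lemma eigsOf_eq {n : ℕ} (A : Matrix (Fin n) (Fin n) ℝ) (hA : A.IsHermitian) :
    eigsOf A = hA.eigenvalues := by
  unfold eigsOf
  rw [dif_pos hA]

lemma rayleigh_le {n : ℕ} (A : Matrix (Fin n) (Fin n) ℝ) (hA : A.IsHermitian) (v : Fin n → ℝ)
    (hv : ∑ i, v i ^ 2 = 1) : v ⬝ᵥ (A.mulVec v) ≤ lambdaMax A := by
  have hle : ∀ i, hA.eigenvalues i ≤ lambdaMax A := by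
    intro i
    have := le_ciSup (f := eigsOf A) (Set.finite_range _).bddAbove i
    rw [← eigsOf_eq A hA]
    exact this
  set b := hA.eigenvectorBasis with hb
  have h1 := b.sum_inner_mul_inner (WithLp.toLp 2 v) (WithLp.toLp 2 v)
  have h2 := b.sum_inner_mul_inner (WithLp.toLp 2 v) (WithLp.toLp 2 (A.mulVec v))
  have hAb : ∀ i, inner ℝ (b i) (WithLp.toLp 2 (A.mulVec v))
      = hA.eigenvalues i * inner ℝ (b i) (WithLp.toLp 2 v) := by
    intro i
    have h3 := hA.mulVec_eigenvectorBasis i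
    have hAT : A.transpose = A := by simpa using hA.eq
    simp only [EuclideanSpace.inner_eq_star_dotProduct, star_trivial]
    rw [dotProduct_comm, Matrix.dotProduct_mulVec, ← Matrix.mulVec_transpose, hAT, h3,
      smul_dotProduct, dotProduct_comm]
    rfl
  simp only [hAb] at h2
  have e1 : inner ℝ (WithLp.toLp 2 v) (WithLp.toLp 2 v) = (1 : ℝ) := by
    simp only [EuclideanSpace.inner_eq_star_dotProduct, star_trivial, dotProduct]
    rw [← hv]; exact Finset.sum_congr rfl fun i _ => by ring
  have e2 : inner ℝ (WithLp.toLp 2 v) (WithLp.toLp 2 (A.mulVec v)) = v ⬝ᵥ (A.mulVec v) := by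
    simp only [EuclideanSpace.inner_eq_star_dotProduct, star_trivial]
    exact dotProduct_comm _ _
  rw [e1] at h1
  rw [e2] at h2
  rw [← h2, ← mul_one (lambdaMax A), ← h1, Finset.mul_sum]
  refine Finset.sum_le_sum fun i _ => ?_
  rw [real_inner_comm]
  nlinarith [hle i, mul_self_nonneg (inner ℝ (b i) (WithLp.toLp 2 v))]

lemma rayleigh_eq {n : ℕ} (hn : 1 ≤ n) (A : Matrix (Fin n) (Fin n) ℝ) (hA : A.IsHermitian) :
    ∃ v : Fin n → ℝ, ∑ i, v i ^ 2 = 1 ∧ lambdaMax A = v ⬝ᵥ (A.mulVec v) := by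
  have : Nonempty (Fin n) := ⟨⟨0, hn⟩⟩
  obtain ⟨i, hi⟩ := exists_eq_ciSup_of_finite (f := eigsOf A)
  have hv : ∑ j, (hA.eigenvectorBasis i) j ^ 2 = 1 := by
    have := hA.eigenvectorBasis.orthonormal.1 i
    rw [EuclideanSpace.norm_eq, Real.sqrt_eq_one] at this
    simpa using this
  refine ⟨hA.eigenvectorBasis i, hv, ?_⟩
  rw [hA.mulVec_eigenvectorBasis i, dotProduct_smul, lambdaMax, ← hi, dotProduct]
  simp only [← pow_two, hv]
  simp [eigsOf_eq A hA]

lemma weight_sum (n r : ℕ) (δ : GoteSpace r n) :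
    ∑ a : Fin r → Fin n, ((r : ℝ) / permCount a) * δ (tupleSym a) ^ 2 ≤ r * ∑ m, δ m ^ 2 := by
  classical
  rw [← Finset.sum_fiberwise Finset.univ (fun a : Fin r → Fin n => tupleSym a), Finset.mul_sum]
  refine Finset.sum_le_sum fun m _ => ?_
  set S := Finset.univ.filter (fun a : Fin r → Fin n => tupleSym a = m) with hS
  have : ∀ a ∈ S, ((r : ℝ) / permCount a) * δ (tupleSym a) ^ 2 = ((r : ℝ) / S.card) * δ m ^ 2 := by
    intro a ha
    have ha : tupleSym a = m := (Finset.mem_filter.1 ha).2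
    have : permCount a = S.card := by
      rw [permCount, ha, hS]
    rw [this, ha]
  rw [Finset.sum_congr rfl this, Finset.sum_const, nsmul_eq_mul]
  rcases Nat.eq_zero_or_pos S.card with h | h
  · rw [h]; simp; positivity
  · have : (S.card : ℝ) ≠ 0 := by positivity
    apply le_of_eq; field_simp

lemma quad_form (n r : ℕ) (ω : GoteSpace r n) (x : Fin (r - 2) → (Fin n → ℝ)) (c : ℝ)
    (v : Fin n → ℝ) : v ⬝ᵥ ((c • generalContraction ω x).mulVec v)
      = c * ∑ p : Fin n × Fin n × (Fin (r - 2) → Fin n),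
        (v p.1 * v p.2.1 * ∏ k, x k (p.2.2 k)) * gote ω (glue p.1 p.2.1 p.2.2) := by
  simp only [Fintype.sum_prod_type, dotProduct, Matrix.mulVec, Matrix.smul_apply,
    generalContraction, smul_eq_mul, Finset.mul_sum, Finset.sum_mul]
  refine Finset.sum_congr rfl fun i _ => Finset.sum_congr rfl fun j _ =>
    Finset.sum_congr rfl fun f _ => ?_
  ring

lemma quad_bound (n r : ℕ) (hr : 3 ≤ r) (x : Fin (r - 2) → (Fin n → ℝ))
    (hx : ∀ k, ∑ i, x k i ^ 2 = 1) (v : Fin n → ℝ) (hv : ∑ i, v i ^ 2 = 1) (δ : GoteSpace r n) :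
    ∑ p : Fin n × Fin n × (Fin (r - 2) → Fin n),
        (v p.1 * v p.2.1 * ∏ k, x k (p.2.2 k)) * gote δ (glue p.1 p.2.1 p.2.2)
      ≤ √r * √(∑ m, δ m ^ 2) := by
  refine (Real.sum_mul_le_sqrt_mul_sqrt _ _ _).trans ?_
  have h1 : ∑ p : Fin n × Fin n × (Fin (r - 2) → Fin n),
      (v p.1 * v p.2.1 * ∏ k, x k (p.2.2 k)) ^ 2 = 1 := by
    simp only [Fintype.sum_prod_type, mul_pow, ← Finset.prod_pow, ← Finset.mul_sum]
    rw [← Fintype.prod_sum (fun k i => x k i ^ 2)]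
    simp only [hx, Finset.prod_const_one, mul_one]
    simp only [← Finset.mul_sum, hv, mul_one]
  rw [h1, Real.sqrt_one, one_mul, ← Real.sqrt_mul (by positivity)]
  apply Real.sqrt_le_sqrt
  refine le_trans ?_ (weight_sum n r δ)
  classical
  have h2 : ∀ a : Fin r → Fin n, gote δ a ^ 2 = ((r : ℝ) / permCount a) * δ (tupleSym a) ^ 2 := by
    intro a
    rw [gote, mul_pow, Real.sq_sqrt (by positivity)]
  simp only [h2]
  rw [← Finset.sum_image (f := fun a : Fin r → Fin n =>
    ((r : ℝ) / permCount a) * δ (tupleSym a) ^ 2) (fun a _ b _ h => glue_inj n r hr h)]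
  exact Finset.sum_le_sum_of_subset_of_nonneg (Finset.subset_univ _)
    (fun a _ _ => by positivity)

lemma lip (n r : ℕ) (hr : 3 ≤ r) (hn : 1 ≤ n) (x : Fin (r - 2) → (Fin n → ℝ))
    (hx : ∀ k, ∑ i, x k i ^ 2 = 1) (ω ω' : GoteSpace r n) :
    lambdaMax ((Real.sqrt n)⁻¹ • generalContraction ω x)
      - lambdaMax ((Real.sqrt n)⁻¹ • generalContraction ω' x)
      ≤ ((√n)⁻¹ * √r) * √(∑ m, (ω m - ω' m) ^ 2) := by
  obtain ⟨v, hv, hE⟩ := rayleigh_eq hn _ (herm n r hr ω x (√n)⁻¹)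
  have h2 := rayleigh_le _ (herm n r hr ω' x (√n)⁻¹) v hv
  have h3 := quad_bound n r hr x hx v hv (fun m => ω m - ω' m)
  have h4 : ∀ a : Fin r → Fin n, gote (fun m => ω m - ω' m) a = gote ω a - gote ω' a := by
    intro a; simp only [gote]; ring
  simp only [h4, mul_sub, Finset.sum_sub_distrib] at h3
  rw [quad_form] at hE h2
  have h5 := mul_le_mul_of_nonneg_left h3 (show 0 ≤ (√(n : ℝ))⁻¹ by positivity)
  rw [mul_sub] at h5
  rw [hE, mul_assoc]
  linarith

end GConc

/-- **Concentration of the largest eigenvalue of a contraction.**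
For unit vectors `x₃, …, x_r`, and `L = G·x₃⊗⋯⊗x_r`,
`P(|λ₁(n^{−1/2}L) − E λ₁(n^{−1/2}L)| > ε) ≤ 2·exp(−nε²/(2r))`. -/
theorem top_eigenvalue_concentration
    (r n : ℕ) (hr : 3 ≤ r) (hn : 1 ≤ n)
    (x : Fin (r - 2) → (Fin n → ℝ)) (hx : ∀ k, ∑ i, x k i ^ 2 = 1)
    (ε : ℝ) (hε : 0 < ε) :
    goteMeasure r n {ω |
        ε < |lambdaMax ((Real.sqrt n)⁻¹ • generalContraction ω x)
            - ∫ ω', lambdaMax ((Real.sqrt n)⁻¹ • generalContraction ω' x)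
                ∂(goteMeasure r n)|}
      ≤ ENNReal.ofReal (2 * Real.exp (-((n : ℝ) * ε ^ 2) / (2 * (r : ℝ)))) := by
  have h := GConc.gauss_conc _ (GConc.cont_lip _ _ (GConc.lip n r hr hn x hx)).measurable
    ((√n)⁻¹ * √r) (by positivity) (GConc.lip n r hr hn x hx) ε hε
  refine h.trans (le_of_eq ?_)
  congr 3
  have hn0 : (n : ℝ) ≠ 0 := by positivity
  have hr0 : (r : ℝ) ≠ 0 := by positivity
  rw [mul_pow, inv_pow, Real.sq_sqrt (by positivity), Real.sq_sqrt (by positivity)]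
  field_simp
end

section
/- Let n ≥ 2, let x, y ∈ ℝⁿ be unit vectors that are linearly independent, let a ∈ ℝ and b ∈ ℝ with b ≠ 0, and set t = ⟨x,y⟩, B = a·xxᵀ + b(xyᵀ + yxᵀ), λ_± = (a + 2bt ± √(a² + 4abt + 4b²))/2, s_± = √(λ_±² + b²(1 − t²)), γ_± = sign(b)·(λ_± − bt)/s_±, δ_± = |b|/s_±, and v_± = γ_±·x + δ_±·y. Then: (i) λ_+ and λ_− are nonzero, and every nonzero eigenvalue of B equals λ_+ or λ_−; (ii) v_+ and v_− are unit vectors satisfying B·v_± = λ_±·v_±; (iii) ⟨x, v_±⟩ = sign(b)·λ_±/s_±. -/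
noncomputable section

/-- The Euclidean inner product on `ℝⁿ`. -/
def dotp {n : ℕ} (x y : Fin n → ℝ) : ℝ := ∑ i, x i * y i

/-- The rank-two symmetric matrix `B = a·xxᵀ + b(xyᵀ + yxᵀ)`. -/
def Bmat {n : ℕ} (a b : ℝ) (x y : Fin n → ℝ) : Matrix (Fin n) (Fin n) ℝ :=
  fun i j => a * x i * x j + b * (x i * y j + y i * x j)

/-- `λ₊ = (a + 2bt + √(a² + 4abt + 4b²))/2`. -/
def lamP (a b t : ℝ) : ℝ := (a + 2 * b * t + Real.sqrt (a ^ 2 + 4 * a * b * t + 4 * b ^ 2)) / 2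

/-- `λ₋ = (a + 2bt − √(a² + 4abt + 4b²))/2`. -/
def lamM (a b t : ℝ) : ℝ := (a + 2 * b * t - Real.sqrt (a ^ 2 + 4 * a * b * t + 4 * b ^ 2)) / 2

/-- `s = √(λ² + b²(1 − t²))`. -/
def sOf (b t lam : ℝ) : ℝ := Real.sqrt (lam ^ 2 + b ^ 2 * (1 - t ^ 2))

/-- The eigenvector `v = γ·x + δ·y` with `γ = sign(b)(λ − bt)/s` and `δ = |b|/s`. -/
def vOf {n : ℕ} (b t lam : ℝ) (x y : Fin n → ℝ) : Fin n → ℝ :=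
  fun i => (Real.sign b * (lam - b * t) / sOf b t lam) * x i + (|b| / sOf b t lam) * y i

end

theorem dotp_comb {n : ℕ} (w x y : Fin n → ℝ) (g d : ℝ) :
    dotp w (fun i => g * x i + d * y i) = g * dotp w x + d * dotp w y := by
  simp only [dotp, Finset.mul_sum, ← Finset.sum_add_distrib]
  exact Finset.sum_congr rfl fun i _ => by ring

theorem dotp_comm' {n : ℕ} (x y : Fin n → ℝ) : dotp x y = dotp y x := by
  simp only [dotp]
  exact Finset.sum_congr rfl fun i _ => by ring

theorem Bmat_mulVec {n : ℕ} (a b : ℝ) (x y v : Fin n → ℝ) :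
    (Bmat a b x y).mulVec v =
      fun i => (a * dotp x v + b * dotp y v) * x i + (b * dotp x v) * y i := by
  funext i
  simp only [Matrix.mulVec, dotProduct, Bmat, dotp, Finset.mul_sum, ← Finset.sum_add_distrib,
    Finset.sum_mul]
  exact Finset.sum_congr rfl fun i _ => by ring

theorem dotp_sq_lt {n : ℕ} (x y : Fin n → ℝ) (hx : dotp x x = 1) (hy : dotp y y = 1)
    (hind : LinearIndependent ℝ ![x, y]) : dotp x y ^ 2 < 1 := by
  by_contra! hcon
  have h1 : ∑ i, (y i - dotp x y * x i) ^ 2 = 1 - dotp x y ^ 2 := by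
    have h2 : ∀ c : ℝ, ∑ i, (y i - c * x i) ^ 2
        = dotp y y - 2 * c * dotp x y + c ^ 2 * dotp x x := by
      intro c
      simp only [dotp, Finset.mul_sum]
      rw [← Finset.sum_sub_distrib, ← Finset.sum_add_distrib]
      exact Finset.sum_congr rfl fun i _ => by ring
    rw [h2, hx, hy]
    ring
  have h3 : ∑ i, (y i - dotp x y * x i) ^ 2 = 0 :=
    le_antisymm (by linarith) (Finset.sum_nonneg fun i _ => sq_nonneg _)
  rw [Finset.sum_eq_zero_iff_of_nonneg (fun i _ => sq_nonneg _)] at h3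
  have h4 := LinearIndependent.pair_iff.1 hind (dotp x y) (-1) (by
    funext i
    have := pow_eq_zero_iff (two_ne_zero) |>.1 (h3 i (Finset.mem_univ i))
    simp only [Pi.add_apply, Pi.smul_apply, smul_eq_mul, Pi.zero_apply]
    linarith)
  exact absurd h4.2 (by norm_num)

theorem eig_facts {n : ℕ} (x y : Fin n → ℝ) (hx : dotp x x = 1) (hy : dotp y y = 1)
    (a b : ℝ) (hb : b ≠ 0) (ht : dotp x y ^ 2 < 1) (l : ℝ)
    (hl : l ^ 2 - (a + 2 * b * dotp x y) * l - b ^ 2 * (1 - dotp x y ^ 2) = 0) :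
    l ≠ 0 ∧ (∑ i, vOf b (dotp x y) l x y i ^ 2 = 1) ∧
    (Bmat a b x y).mulVec (vOf b (dotp x y) l x y) = l • vOf b (dotp x y) l x y ∧
    dotp x (vOf b (dotp x y) l x y) = Real.sign b * l / sOf b (dotp x y) l := by
  have hyx : dotp y x = dotp x y := dotp_comm' y x
  have hc : 0 < b ^ 2 * (1 - dotp x y ^ 2) := by
    have := sub_pos.2 ht
    positivity
  have hs2 : sOf b (dotp x y) l ^ 2 = l ^ 2 + b ^ 2 * (1 - dotp x y ^ 2) :=
    Real.sq_sqrt (by positivity)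
  have hs : 0 < sOf b (dotp x y) l := Real.sqrt_pos.2 (by positivity)
  have habs : |b| = Real.sign b * b := by
    rcases lt_or_gt_of_ne hb with h | h
    · rw [abs_of_neg h, Real.sign_of_neg h]; ring
    · rw [abs_of_pos h, Real.sign_of_pos h]; ring
  have hσ : Real.sign b ^ 2 = 1 := by
    rcases lt_or_gt_of_ne hb with h | h
    · rw [Real.sign_of_neg h]; ring
    · rw [Real.sign_of_pos h]; ring
  have hv : vOf b (dotp x y) l x y = fun i =>
      (Real.sign b * (l - b * dotp x y) / sOf b (dotp x y) l) * x i
        + (Real.sign b * b / sOf b (dotp x y) l) * y i := by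
    funext i
    simp only [vOf, habs]
  have hxv : dotp x (vOf b (dotp x y) l x y) = Real.sign b * l / sOf b (dotp x y) l := by
    rw [hv, dotp_comb, hx]
    field_simp
    ring
  have hyv : dotp y (vOf b (dotp x y) l x y)
      = Real.sign b * (l * dotp x y + b * (1 - dotp x y ^ 2)) / sOf b (dotp x y) l := by
    rw [hv, dotp_comb, hy, hyx]
    field_simp
    ring
  refine ⟨?_, ?_, ?_, hxv⟩
  · rintro rfl
    nlinarith
  · have h1 : ∑ i, vOf b (dotp x y) l x y i ^ 2
        = dotp (vOf b (dotp x y) l x y) (vOf b (dotp x y) l x y) := by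
      simp only [dotp, sq]
    have h2 : dotp (vOf b (dotp x y) l x y) (vOf b (dotp x y) l x y)
        = (Real.sign b * (l - b * dotp x y) / sOf b (dotp x y) l)
            * dotp (vOf b (dotp x y) l x y) x
          + (Real.sign b * b / sOf b (dotp x y) l) * dotp (vOf b (dotp x y) l x y) y := by
      rw [← dotp_comb, ← hv]
    rw [h1, h2, dotp_comm' (vOf b (dotp x y) l x y) x, dotp_comm' (vOf b (dotp x y) l x y) y, hxv, hyv]
    field_simp
    rw [hs2, hσ]
    ring
  · rw [Bmat_mulVec, hxv, hyv]
    funext i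
    rw [hv]
    simp only [Pi.smul_apply, smul_eq_mul]
    field_simp
    linear_combination (-Real.sign b * x i) * hl

theorem lam_roots (a b t : ℝ) (ht : t ^ 2 < 1) (l : ℝ) :
    l ^ 2 - (a + 2 * b * t) * l - b ^ 2 * (1 - t ^ 2) = (l - lamP a b t) * (l - lamM a b t) := by
  have hd : 0 ≤ a ^ 2 + 4 * a * b * t + 4 * b ^ 2 := by
    nlinarith [sq_nonneg (a + 2 * b * t), mul_nonneg (sq_nonneg b) (sub_pos.2 ht).le]
  have h := Real.sq_sqrt hd
  simp only [lamP, lamM]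
  linear_combination (1 / 4) * h

/-- **Eigen-structure of the rank-two perturbation** `B = a·xxᵀ + b(xyᵀ + yxᵀ)` for unit
vectors `x, y` that are linearly independent and `b ≠ 0`, with `t = ⟨x,y⟩`:
(i) `λ₊, λ₋` are nonzero and every nonzero eigenvalue of `B` equals `λ₊` or `λ₋`;
(ii) `v₊, v₋` are unit eigenvectors for `λ₊, λ₋`;
(iii) `⟨x, v₊⟩ = sign(b)·λ₊/s₊` and `⟨x, v₋⟩ = sign(b)·λ₋/s₋`. -/
theorem rank_two_eigen_structure
    (n : ℕ) (hn : 2 ≤ n) (x y : Fin n → ℝ)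
    (hx : ∑ i, x i ^ 2 = 1) (hy : ∑ i, y i ^ 2 = 1)
    (hind : LinearIndependent ℝ ![x, y])
    (a b : ℝ) (hb : b ≠ 0) :
    (lamP a b (dotp x y) ≠ 0 ∧ lamM a b (dotp x y) ≠ 0 ∧
      ∀ lam : ℝ, lam ≠ 0 →
        (∃ v : Fin n → ℝ, v ≠ 0 ∧ (Bmat a b x y).mulVec v = lam • v) →
        lam = lamP a b (dotp x y) ∨ lam = lamM a b (dotp x y))
    ∧ ((∑ i, vOf b (dotp x y) (lamP a b (dotp x y)) x y i ^ 2 = 1) ∧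
        (Bmat a b x y).mulVec (vOf b (dotp x y) (lamP a b (dotp x y)) x y)
          = lamP a b (dotp x y) • vOf b (dotp x y) (lamP a b (dotp x y)) x y ∧
      (∑ i, vOf b (dotp x y) (lamM a b (dotp x y)) x y i ^ 2 = 1) ∧
        (Bmat a b x y).mulVec (vOf b (dotp x y) (lamM a b (dotp x y)) x y)
          = lamM a b (dotp x y) • vOf b (dotp x y) (lamM a b (dotp x y)) x y)
    ∧ (dotp x (vOf b (dotp x y) (lamP a b (dotp x y)) x y)
          = Real.sign b * lamP a b (dotp x y) / sOf b (dotp x y) (lamP a b (dotp x y)) ∧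
       dotp x (vOf b (dotp x y) (lamM a b (dotp x y)) x y)
          = Real.sign b * lamM a b (dotp x y) / sOf b (dotp x y) (lamM a b (dotp x y))) := by
  have hx' : dotp x x = 1 := by rw [← hx]; simp only [dotp, sq]
  have hy' : dotp y y = 1 := by rw [← hy]; simp only [dotp, sq]
  have ht := dotp_sq_lt x y hx' hy' hind
  have hr := lam_roots a b (dotp x y) ht
  obtain ⟨p1, p2, p3, p4⟩ := eig_facts x y hx' hy' a b hb ht (lamP a b (dotp x y))
    (by rw [hr]; ring)
  obtain ⟨m1, m2, m3, m4⟩ := eig_facts x y hx' hy' a b hb ht (lamM a b (dotp x y))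
    (by rw [hr]; ring)
  refine ⟨⟨p1, m1, ?_⟩, ⟨p2, p3, m2, m3⟩, p4, m4⟩
  rintro l hl ⟨v, hv, he⟩
  have hyx : dotp y x = dotp x y := dotp_comm' y x
  rw [Bmat_mulVec] at he
  have hsm : ∀ w : Fin n → ℝ, dotp w (l • v) = l * dotp w v := by
    intro w
    simp only [dotp, Finset.mul_sum, Pi.smul_apply, smul_eq_mul]
    exact Finset.sum_congr rfl fun i _ => by ring
  have e1 : (a * dotp x v + b * dotp y v) * dotp x x + (b * dotp x v) * dotp x y
      = l * dotp x v := by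
    rw [← hsm, ← he, dotp_comb]
  have e2 : (a * dotp x v + b * dotp y v) * dotp y x + (b * dotp x v) * dotp y y
      = l * dotp y v := by
    rw [← hsm, ← he, dotp_comb]
  rw [hx'] at e1
  rw [hy', hyx] at e2
  have hp : dotp x v ≠ 0 := by
    intro h0
    rw [h0] at e1
    have hq : dotp y v = 0 := by
      have : b * dotp y v = 0 := by linarith
      exact (mul_eq_zero.1 this).resolve_left hb
    apply hv
    funext i
    have := congrFun he i
    simp only [h0, hq, Pi.smul_apply, smul_eq_mul] at this
    have h3 : l * v i = 0 := by linarith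
    exact (mul_eq_zero.1 h3).resolve_left hl
  have h4 : (l ^ 2 - (a + 2 * b * dotp x y) * l - b ^ 2 * (1 - dotp x y ^ 2)) * dotp x v = 0 := by
    linear_combination (-(l - b * dotp x y)) * e1 - b * e2
  have h5 := (mul_eq_zero.1 h4).resolve_right hp
  rw [hr] at h5
  rcases mul_eq_zero.1 h5 with h | h
  · left; linarith
  · right; linarith
end

section
/- Let n ≥ 1, let G be a GOTE(4,n) tensor, let u, v ∈ ℝⁿ be unit vectors and set ρ = ⟨u,v⟩. On an auxiliary probability space let U be a standard Gaussian random variable, let V₁ and W be independent vectors of n independent standard Gaussians, set V₂ = ρV₁ + √(1−ρ²)·W (so that (V₁,V₂) is centered Gaussian with Cov(V₁ᵢ,V₁ⱼ) = Cov(V₂ᵢ,V₂ⱼ) = δ_{ij} and Cov(V₁ᵢ,V₂ⱼ) = ρδ_{ij}), and let Z be a GOE(n) matrix (a random real symmetric n×n matrix whose entries (Z_{ij})_{i ≤ j} are independent centered Gaussians with Var(Z_{ij}) = 1 for i < j and Var(Z_{ii}) = 2, and Z_{ji} = Z_{ij}), with U, (V₁,W), Z mutually independent. Then the law of the random symmetric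 matrix G·u⊗v equals the law of (1/√6)·U·(uvᵀ + vuᵀ) + (1/√6)·(V₁uᵀ + uV₁ᵀ + V₂vᵀ + vV₂ᵀ) + (1/√6)·√(1+ρ²)·Z. -/
open MeasureTheory ProbabilityTheory Filter

/-- Index set for the upper-triangular entries of an `n × n` matrix. -/
abbrev UpperIdx (n : ℕ) : Type := {p : Fin n × Fin n // p.1 ≤ p.2}

/-- The law of the upper-triangular entries of a GOE(n) matrix: independent centered
Gaussians with variance `2` on the diagonal and `1` off the diagonal. -/
noncomputable def goeMeasure (n : ℕ) : Measure (UpperIdx n → ℝ) :=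
  Measure.pi fun p => gaussianReal 0 (if p.1.1 = p.1.2 then 2 else 1)

/-- The GOE(n) matrix built from its upper-triangular entries. -/
noncomputable def goeMatrix {n : ℕ} (z : UpperIdx n → ℝ) : Matrix (Fin n) (Fin n) ℝ :=
  fun i j => if h : i ≤ j then z ⟨(i, j), h⟩ else z ⟨(j, i), (not_le.mp h).le⟩

/-- The mixed contraction `G·u⊗v` of a GOTE(4,n) tensor: the `n × n` random symmetric
matrix with entries `(G·u⊗v)_{ij} = Σ_{a,b} G_{i,j,a,b} u_a v_b`. -/
noncomputable def mixedContraction {n : ℕ} (ω : GoteSpace 4 n) (u v : Fin n → ℝ) :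
    Matrix (Fin n) (Fin n) ℝ :=
  fun i j => ∑ a : Fin n, ∑ b : Fin n, gote ω ![i, j, a, b] * u a * v b

set_option maxRecDepth 100000 in
theorem sum_perm_four (f : (Fin 4 → Fin 4) → ℝ) : ∑ σ : Equiv.Perm (Fin 4), f σ =
   f ![0,1,2,3] + f ![0,1,3,2] + f ![0,2,1,3] + f ![0,2,3,1] + f ![0,3,1,2] + f ![0,3,2,1]
   + f ![1,0,2,3] + f ![1,0,3,2] + f ![1,2,0,3] + f ![1,2,3,0] + f ![1,3,0,2] + f ![1,3,2,0]
   + f ![2,0,1,3] + f ![2,0,3,1] + f ![2,1,0,3] + f ![2,1,3,0] + f ![2,3,0,1] + f ![2,3,1,0]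
   + f ![3,0,1,2] + f ![3,0,2,1] + f ![3,1,0,2] + f ![3,1,2,0] + f ![3,2,0,1] + f ![3,2,1,0] := by
  have h : (Finset.univ : Finset (Equiv.Perm (Fin 4))).val.map (fun σ => (σ : Fin 4 → Fin 4)) =
   ↑([![0,1,2,3], ![0,1,3,2], ![0,2,1,3], ![0,2,3,1], ![0,3,1,2], ![0,3,2,1],
    ![1,0,2,3], ![1,0,3,2], ![1,2,0,3], ![1,2,3,0], ![1,3,0,2], ![1,3,2,0],
    ![2,0,1,3], ![2,0,3,1], ![2,1,0,3], ![2,1,3,0], ![2,3,0,1], ![2,3,1,0],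
    ![3,0,1,2], ![3,0,2,1], ![3,1,0,2], ![3,1,2,0], ![3,2,0,1], ![3,2,1,0]] : List (Fin 4 → Fin 4)) := by
    decide
  have : ∑ σ : Equiv.Perm (Fin 4), f σ = (((Finset.univ : Finset (Equiv.Perm (Fin 4))).val.map (fun σ => (σ : Fin 4 → Fin 4))).map f).sum := by
    rw [Multiset.map_map]; rfl
  rw [this, h]
  simp only [Multiset.map_coe, Multiset.sum_coe, List.map_cons, List.map_nil, List.sum_cons, List.sum_nil]
  ring

theorem tupleSym_comp {n r : ℕ} (x : Fin r → Fin n) (σ : Equiv.Perm (Fin r)) :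
    tupleSym (x ∘ σ) = tupleSym x := by
  apply Subtype.ext
  exact Multiset.coe_eq_coe.2 (Equiv.Perm.ofFn_comp_perm σ x)

theorem exists_perm_of_tupleSym_eq {n r : ℕ} (x y : Fin r → Fin n) (h : tupleSym y = tupleSym x) :
    ∃ σ : Equiv.Perm (Fin r), x ∘ σ = y := by
  have h1 : tupleSym (y ∘ Tuple.sort y) = tupleSym (x ∘ Tuple.sort x) := by
    rw [tupleSym_comp, tupleSym_comp, h]
  have h2 : List.Perm (List.ofFn (y ∘ Tuple.sort y)) (List.ofFn (x ∘ Tuple.sort x)) :=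
    Multiset.coe_eq_coe.1 (congrArg Subtype.val h1)
  have h3 := h2.eq_of_sortedLE (Tuple.monotone_sort y).sortedLE_ofFn (Tuple.monotone_sort x).sortedLE_ofFn
  have h4 := List.ofFn_injective h3
  refine ⟨(Tuple.sort y)⁻¹.trans (Tuple.sort x), ?_⟩
  funext k
  have := congrFun h4 ((Tuple.sort y)⁻¹ k)
  simpa using this.symm

theorem sum_perm_comp {n r : ℕ} (T : (Fin r → Fin n) → ℝ) (x : Fin r → Fin n) :
    ∑ σ : Equiv.Perm (Fin r), T (x ∘ σ) =
      ((Finset.univ.filter (fun σ : Equiv.Perm (Fin r) => x ∘ σ = x)).card : ℝ) *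
        ∑ y ∈ Finset.univ.filter (fun y => tupleSym y = tupleSym x), T y := by
  classical
  rw [← Finset.sum_fiberwise_of_maps_to (s := Finset.univ)
    (t := Finset.univ.filter (fun y => tupleSym y = tupleSym x))
    (g := fun σ : Equiv.Perm (Fin r) => x ∘ σ)
    (by intro σ _; simp [tupleSym_comp]), Finset.mul_sum]
  refine Finset.sum_congr rfl fun y hy => ?_
  obtain ⟨τ, hτ⟩ := exists_perm_of_tupleSym_eq x y (by simpa using hy)
  have hc : (Finset.univ.filter (fun σ : Equiv.Perm (Fin r) => x ∘ σ = x)).card =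
      (Finset.univ.filter (fun σ : Equiv.Perm (Fin r) => x ∘ σ = y)).card := by
    refine Finset.card_equiv (Equiv.mulRight τ) fun σ => ?_
    simp only [Finset.mem_filter, Finset.mem_univ, true_and, Equiv.coe_mulRight, ← hτ,
      Equiv.Perm.coe_mul, ← Function.comp_assoc]
    exact (τ.surjective.right_cancellable).symm
  rw [hc, ← nsmul_eq_mul]
  apply Finset.sum_eq_card_nsmul
  intro σ hσ
  rw [(Finset.mem_filter.1 hσ).2]

theorem sum_fiber_eq {n : ℕ} (T : (Fin 4 → Fin n) → ℝ) (x : Fin 4 → Fin n) :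
    (4 / (permCount x : ℝ)) * ∑ y ∈ Finset.univ.filter (fun y => tupleSym y = tupleSym x), T y =
      (1 / 6) * ∑ σ : Equiv.Perm (Fin 4), T (x ∘ σ) := by
  have h1 := sum_perm_comp (fun _ => (1 : ℝ)) x
  have h2 := sum_perm_comp T x
  simp only [Finset.sum_const, nsmul_eq_mul, mul_one, Finset.card_univ, Fintype.card_perm,
    Fintype.card_fin] at h1
  rw [h2]
  unfold permCount
  set p : ℝ := ((Finset.univ.filter (fun y => tupleSym y = tupleSym x)).card : ℝ)
  set c : ℝ := ((Finset.univ.filter (fun σ : Equiv.Perm (Fin 4) => x ∘ σ = x)).card : ℝ)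
  have h3 : c * p = 24 := by rw [← h1]; norm_num [Nat.factorial]
  have hp : p ≠ 0 := by rintro h; rw [h] at h3; norm_num at h3
  field_simp
  linear_combination (-(∑ y ∈ Finset.univ.filter (fun y => tupleSym y = tupleSym x), T y)) * h3

theorem gote_var {n : ℕ} (T : (Fin 4 → Fin n) → ℝ) :
    ∑ m : Sym (Fin n) 4, (∑ x, if tupleSym x = m then
      T x * Real.sqrt (((4 : ℕ) : ℝ) / (permCount x : ℝ)) else 0) ^ 2 =
      (1 / 6) * ∑ x, T x * ∑ σ : Equiv.Perm (Fin 4), T (x ∘ σ) := by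
  simp_rw [sq, Finset.sum_mul_sum]
  rw [Finset.sum_comm, Finset.mul_sum]
  refine Finset.sum_congr rfl fun x _ => ?_
  rw [Finset.sum_comm]
  have : (1 / 6) * (T x * ∑ σ : Equiv.Perm (Fin 4), T (x ∘ σ)) = T x * ((1 / 6) *  ∑ σ : Equiv.Perm (Fin 4), T (x ∘ σ)) := by ring
  rw [this, ← sum_fiber_eq, Finset.mul_sum, Finset.mul_sum, Finset.sum_filter]
  refine Finset.sum_congr rfl fun y _ => ?_
  simp only [ite_mul, zero_mul, Finset.sum_ite_eq, Finset.mem_univ, if_true]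
  split_ifs with h
  · have hp : permCount y = permCount x := by unfold permCount; rw [h]
    have := Real.mul_self_sqrt (show (0:ℝ) ≤ ((4 : ℕ) : ℝ) / (permCount x : ℝ) by positivity)
    rw [hp]
    push_cast at this ⊢
    linear_combination T x * T y * this
  · simp

theorem pi_gauss {ι : Type*} [Fintype ι] (s : ι → NNReal) (c : ι → ℝ) :
    ∫ x, Complex.exp (((∑ k, c k * x k : ℝ) : ℂ) * Complex.I)
      ∂(Measure.pi fun k => gaussianReal 0 (s k)) =
    Complex.exp (-(((∑ k, (s k : ℝ) * c k ^ 2 : ℝ) : ℂ) / 2)) := by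
  have h : ∀ x : ι → ℝ, Complex.exp (((∑ k, c k * x k : ℝ) : ℂ) * Complex.I) =
      ∏ k, Complex.exp ((c k : ℂ) * (x k : ℂ) * Complex.I) := by
    intro x
    rw [← Complex.exp_sum, ← Finset.sum_mul]
    push_cast
    rfl
  simp_rw [h]
  rw [integral_fintype_prod_eq_prod (f := fun k (t : ℝ) => Complex.exp ((c k : ℂ) * (t : ℂ) * Complex.I))]
  simp_rw [← charFun_apply_real, charFun_gaussianReal]
  rw [← Complex.exp_sum]
  congr 1
  push_cast
  rw [Finset.sum_div, ← Finset.sum_neg_distrib]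
  refine Finset.sum_congr rfl fun k _ => ?_
  simp

def finFourEquiv (α : Type*) : (Fin 4 → α) ≃ α × α × α × α where
  toFun x := (x 0, x 1, x 2, x 3)
  invFun p := ![p.1, p.2.1, p.2.2.1, p.2.2.2]
  left_inv x := by funext k; fin_cases k <;> rfl
  right_inv p := rfl

theorem sum_fin_four {n : ℕ} (f : (Fin 4 → Fin n) → ℝ) :
    ∑ x, f x = ∑ i, ∑ j, ∑ k, ∑ l, f ![i, j, k, l] := by
  rw [← (finFourEquiv (Fin n)).symm.sum_comp, Fintype.sum_prod_type]
  simp_rw [Fintype.sum_prod_type]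
  rfl

theorem bilin_symm {n : ℕ} (A : Fin n → Fin n → ℝ) (hA : ∀ i j, A i j = A j i) (f g : Fin n → ℝ) :
    ∑ i, ∑ j, A i j * (f i * g j) = ∑ i, ∑ j, A i j * (g i * f j) := by
  rw [Finset.sum_comm]
  refine Finset.sum_congr rfl fun i _ => Finset.sum_congr rfl fun j _ => ?_
  rw [hA]; ring

theorem bilin_right {n : ℕ} (A : Fin n → Fin n → ℝ) (f g : Fin n → ℝ) :
    ∑ i, ∑ j, A i j * (f i * g j) = ∑ i, f i * ∑ j, A i j * g j := by
  simp_rw [Finset.mul_sum]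
  refine Finset.sum_congr rfl fun i _ => Finset.sum_congr rfl fun j _ => ?_
  ring

/-- inner sum, with `i, j` fixed -/
theorem inner_quad {n : ℕ} (A : Fin n → Fin n → ℝ) (u v : Fin n → ℝ) (i j : Fin n) :
    ∑ k, ∑ l, (u k * v l) * (A i j * (u k * v l + u l * v k) + A k l * (u i * v j + u j * v i)
      + A i k * (u j * v l + u l * v j) + A i l * (u j * v k + u k * v j)
      + A j k * (u i * v l + u l * v i) + A j l * (u i * v k + u k * v i)) =
    A i j * ((∑ k, u k ^ 2) * (∑ l, v l ^ 2)) + A i j * ((∑ k, u k * v k) * (∑ l, u l * v l))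
    + (u i * v j + u j * v i) * (∑ k, ∑ l, A k l * (u k * v l))
    + u j * ((∑ k, A i k * u k) * (∑ l, v l ^ 2))
    + v j * ((∑ k, A i k * u k) * (∑ l, u l * v l))
    + u j * ((∑ k, u k * v k) * (∑ l, A i l * v l))
    + v j * ((∑ k, u k ^ 2) * (∑ l, A i l * v l))
    + u i * ((∑ k, A j k * u k) * (∑ l, v l ^ 2))
    + v i * ((∑ k, A j k * u k) * (∑ l, u l * v l))
    + u i * ((∑ k, u k * v k) * (∑ l, A j l * v l))
    + v i * ((∑ k, u k ^ 2) * (∑ l, A j l * v l)) := by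
  simp only [Finset.sum_mul_sum]
  simp only [Finset.mul_sum, ← Finset.sum_add_distrib]
  refine Finset.sum_congr rfl fun k _ => Finset.sum_congr rfl fun l _ => ?_
  ring

theorem lhs_quad {n : ℕ} (A : Fin n → Fin n → ℝ) (hA : ∀ i j, A i j = A j i) (u v : Fin n → ℝ)
    (hu : ∑ i, u i ^ 2 = 1) (hv : ∑ i, v i ^ 2 = 1) (T : (Fin 4 → Fin n) → ℝ)
    (hT : ∀ x, T x = A (x 0) (x 1) * u (x 2) * v (x 3)) :
    ∑ x, T x * ∑ σ : Equiv.Perm (Fin 4), T (x ∘ σ) =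
      2 * (1 + (∑ k, u k * v k) ^ 2) * ∑ i, ∑ j, A i j ^ 2
      + 4 * (∑ i, ∑ j, A i j * (u i * v j)) ^ 2
      + 4 * ∑ i, (∑ k, A i k * u k) ^ 2 + 4 * ∑ i, (∑ k, A i k * v k) ^ 2
      + 8 * (∑ k, u k * v k) * ∑ i, (∑ k, A i k * u k) * (∑ k, A i k * v k) := by
  have h1 : ∀ i j k l : Fin n, T ![i, j, k, l] * ∑ σ : Equiv.Perm (Fin 4), T (![i, j, k, l] ∘ σ) =
      (2 * A i j) * ((u k * v l) * (A i j * (u k * v l + u l * v k) + A k l * (u i * v j + u j * v i)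
      + A i k * (u j * v l + u l * v j) + A i l * (u j * v k + u k * v j)
      + A j k * (u i * v l + u l * v i) + A j l * (u i * v k + u k * v i))) := by
    intro i j k l
    rw [sum_perm_four (fun s => T (![i, j, k, l] ∘ s))]
    have e0 : (![i, j, k, l] : Fin 4 → Fin n) 0 = i := rfl
    have e1 : (![i, j, k, l] : Fin 4 → Fin n) 1 = j := rfl
    have e2 : (![i, j, k, l] : Fin 4 → Fin n) 2 = k := rfl
    have e3 : (![i, j, k, l] : Fin 4 → Fin n) 3 = l := rfl
    have c0 : ∀ a b c d : Fin 4, (![a, b, c, d] : Fin 4 → Fin 4) 0 = a := fun _ _ _ _ => rfl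
    have c1 : ∀ a b c d : Fin 4, (![a, b, c, d] : Fin 4 → Fin 4) 1 = b := fun _ _ _ _ => rfl
    have c2 : ∀ a b c d : Fin 4, (![a, b, c, d] : Fin 4 → Fin 4) 2 = c := fun _ _ _ _ => rfl
    have c3 : ∀ a b c d : Fin 4, (![a, b, c, d] : Fin 4 → Fin 4) 3 = d := fun _ _ _ _ => rfl
    simp only [hT, Function.comp_apply, c0, c1, c2, c3, e0, e1, e2, e3]
    rw [hA j i, hA k i, hA l i, hA k j, hA l j, hA l k]
    ring
  rw [sum_fin_four]
  simp_rw [h1, ← Finset.mul_sum, inner_quad, hu, hv]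
  set ρ := ∑ k, u k * v k with hρ
  set q := ∑ i, ∑ j, A i j * (u i * v j) with hq
  set a : Fin n → ℝ := fun i => ∑ k, A i k * u k with ha
  set b : Fin n → ℝ := fun i => ∑ k, A i k * v k with hb
  have ha' : ∀ i, ∑ k, A i k * u k = a i := fun i => rfl
  have hb' : ∀ i, ∑ k, A i k * v k = b i := fun i => rfl
  simp only [ha', hb']
  have hq2 : ∑ i, ∑ j, A i j * (v i * u j) = q := by rw [bilin_symm A hA]
  have faa : ∑ i, ∑ j, A i j * (a i * u j) = ∑ i, a i ^ 2 := by
    rw [bilin_right]; exact Finset.sum_congr rfl fun i _ => by rw [ha']; ring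
  have fab : ∑ i, ∑ j, A i j * (a i * v j) = ∑ i, a i * b i := by
    rw [bilin_right]
  have fba : ∑ i, ∑ j, A i j * (b i * u j) = ∑ i, a i * b i := by
    rw [bilin_right]; exact Finset.sum_congr rfl fun i _ => by rw [ha']; ring
  have fbb : ∑ i, ∑ j, A i j * (b i * v j) = ∑ i, b i ^ 2 := by
    rw [bilin_right]; exact Finset.sum_congr rfl fun i _ => by rw [hb']; ring
  have faa' := (bilin_symm A hA u a).trans faa
  have fab' := (bilin_symm A hA v a).trans fab
  have fba' := (bilin_symm A hA u b).trans fba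
  have fbb' := (bilin_symm A hA v b).trans fbb
  have hfin : 2 * (1 + ρ ^ 2) * (∑ i, ∑ j, A i j ^ 2) + 2 * q * (∑ i, ∑ j, A i j * (u i * v j))
      + 2 * q * (∑ i, ∑ j, A i j * (v i * u j))
      + 2 * (∑ i, ∑ j, A i j * (a i * u j)) + 2 * ρ * (∑ i, ∑ j, A i j * (a i * v j))
      + 2 * ρ * (∑ i, ∑ j, A i j * (b i * u j)) + 2 * (∑ i, ∑ j, A i j * (b i * v j))
      + 2 * (∑ i, ∑ j, A i j * (u i * a j)) + 2 * ρ * (∑ i, ∑ j, A i j * (v i * a j))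
      + 2 * ρ * (∑ i, ∑ j, A i j * (u i * b j)) + 2 * (∑ i, ∑ j, A i j * (v i * b j)) =
      2 * (1 + ρ ^ 2) * ∑ i, ∑ j, A i j ^ 2 + 4 * q ^ 2 + 4 * ∑ i, a i ^ 2 + 4 * ∑ i, b i ^ 2
      + 8 * ρ * ∑ i, a i * b i := by
    rw [← hq, hq2, faa, fab, fba, fbb, faa', fab', fba', fbb']
    ring
  rw [← hfin]
  clear_value q ρ
  simp only [Finset.mul_sum, ← Finset.sum_add_distrib]
  refine Finset.sum_congr rfl fun i _ => Finset.sum_congr rfl fun j _ => ?_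
  ring

theorem sum_upper {n : ℕ} (F : Fin n → Fin n → ℝ) (hF : ∀ i j, F i j = F j i) :
    ∑ i, ∑ j, F i j = ∑ p : UpperIdx n, (if p.1.1 = p.1.2 then 1 else 2) * F p.1.1 p.1.2 := by
  let H : Fin n → Fin n → ℝ := fun i j => if i ≤ j then (if i = j then 1 else 2) * F i j else 0
  have h1 : ∑ p : UpperIdx n, (if p.1.1 = p.1.2 then 1 else 2) * F p.1.1 p.1.2
      = ∑ i, ∑ j, H i j := by
    rw [← Fintype.sum_prod_type' (f := H), ← Finset.sum_filter]
    exact (Finset.sum_subtype _ (by simp)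
      (fun p : Fin n × Fin n => (if p.1 = p.2 then 1 else 2) * F p.1 p.2)).symm
  have h2 : ∑ i, ∑ j, H i j = ∑ i, ∑ j, H j i := Finset.sum_comm
  have h3 : 2 * ∑ i, ∑ j, F i j = ∑ i, ∑ j, H i j + ∑ i, ∑ j, H j i := by
    simp only [Finset.mul_sum, ← Finset.sum_add_distrib]
    refine Finset.sum_congr rfl fun i _ => Finset.sum_congr rfl fun j _ => ?_
    simp only [H]
    rcases lt_trichotomy i j with h | h | h
    · simp [h.le, h.not_ge, h.ne]
    · subst h; simp; ring
    · simp [h.le, h.not_ge, h.ne, hF i j]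
  rw [h1]; linarith

theorem goeMatrix_symm {n : ℕ} (z : UpperIdx n → ℝ) (i j : Fin n) :
    goeMatrix z i j = goeMatrix z j i := by
  unfold goeMatrix
  rcases lt_trichotomy i j with h | h | h
  · simp [h.le, h.not_ge]
  · subst h; rfl
  · simp [h.le, h.not_ge]

theorem sum_goe {n : ℕ} (A : Fin n → Fin n → ℝ) (hA : ∀ i j, A i j = A j i) (z : UpperIdx n → ℝ) :
    ∑ i, ∑ j, A i j * goeMatrix z i j =
      ∑ p : UpperIdx n, ((if p.1.1 = p.1.2 then 1 else 2) * A p.1.1 p.1.2) * z p := by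
  rw [sum_upper _ (fun i j => by rw [hA i j, goeMatrix_symm])]
  refine Finset.sum_congr rfl fun p _ => ?_
  rw [mul_assoc]
  congr 2
  unfold goeMatrix
  simp [p.2]

theorem gote_swap {n : ℕ} (ω : GoteSpace 4 n) (i j a b : Fin n) :
    gote ω ![j, i, a, b] = gote ω ![i, j, a, b] := by
  have h : (![j, i, a, b] : Fin 4 → Fin n) = ![i, j, a, b] ∘ (Equiv.swap (0 : Fin 4) 1) := by
    funext k; fin_cases k <;> rfl
  have hs : tupleSym (![j, i, a, b] : Fin 4 → Fin n) = tupleSym ![i, j, a, b] := by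
    rw [h, tupleSym_comp]
  unfold gote permCount
  rw [hs]

theorem mixed_apply {n : ℕ} (ω : GoteSpace 4 n) (u v : Fin n → ℝ) (i j : Fin n) :
    mixedContraction ω u v i j = ∑ a : Fin n, ∑ b : Fin n, gote ω ![i, j, a, b] * u a * v b := rfl

theorem mixed_symm {n : ℕ} (ω : GoteSpace 4 n) (u v : Fin n → ℝ) (i j : Fin n) :
    mixedContraction ω u v i j = mixedContraction ω u v j i := by
  rw [mixed_apply, mixed_apply]
  simp_rw [gote_swap ω i j]

theorem sum_symmetrize {n : ℕ} (B M : Fin n → Fin n → ℝ) (hM : ∀ i j, M i j = M j i) :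
    ∑ i, ∑ j, B i j * M i j = ∑ i, ∑ j, ((B i j + B j i) / 2) * M i j := by
  have h : ∑ i, ∑ j, B i j * M i j = ∑ i, ∑ j, B j i * M i j := by
    rw [Finset.sum_comm]
    refine Finset.sum_congr rfl fun i _ => Finset.sum_congr rfl fun j _ => ?_
    rw [hM]
  have h2 : 2 * ∑ i, ∑ j, ((B i j + B j i) / 2) * M i j =
      ∑ i, ∑ j, B i j * M i j + ∑ i, ∑ j, B j i * M i j := by
    simp only [Finset.mul_sum, ← Finset.sum_add_distrib]
    refine Finset.sum_congr rfl fun i _ => Finset.sum_congr rfl fun j _ => ?_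
    ring
  linarith

theorem dual_eq_sum {n : ℕ} (L : StrongDual ℝ (Fin n → Fin n → ℝ)) (M : Fin n → Fin n → ℝ) :
    L M = ∑ i, ∑ j, L (Pi.single i (Pi.single j 1)) * M i j := by
  have h : M = ∑ i, ∑ j, M i j • (Pi.single i (Pi.single j 1) : Fin n → Fin n → ℝ) := by
    funext a b
    simp [Finset.sum_apply, Pi.single_apply, ite_apply]
  conv_lhs => rw [h]
  simp only [map_sum, map_smul, smul_eq_mul, mul_comm]

theorem mixed_linear {n : ℕ} (A : Fin n → Fin n → ℝ) (u v : Fin n → ℝ) (ω : GoteSpace 4 n) :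
    ∑ i, ∑ j, A i j * mixedContraction ω u v i j =
      ∑ m : Sym (Fin n) 4, (∑ x : Fin 4 → Fin n, if tupleSym x = m then
        (A (x 0) (x 1) * u (x 2) * v (x 3)) * Real.sqrt (((4 : ℕ) : ℝ) / (permCount x : ℝ))
          else 0) * ω m := by
  have hmix : ∑ i, ∑ j, A i j * mixedContraction ω u v i j =
    ∑ i, ∑ j, A i j * ∑ a : Fin n, ∑ b : Fin n, gote ω ![i, j, a, b] * u a * v b := rfl
  rw [hmix]
  simp_rw [Finset.sum_mul, ite_mul, zero_mul]
  rw [Finset.sum_comm (γ := Sym (Fin n) 4)]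
  simp only [Finset.sum_ite_eq, Finset.mem_univ, if_true]
  rw [sum_fin_four]
  simp_rw [Finset.mul_sum]
  refine Finset.sum_congr rfl fun i _ => Finset.sum_congr rfl fun j _ =>
    Finset.sum_congr rfl fun k _ => Finset.sum_congr rfl fun l _ => ?_
  unfold gote
  simp only [show (![i, j, k, l] : Fin 4 → Fin n) 0 = i from rfl,
    show (![i, j, k, l] : Fin 4 → Fin n) 1 = j from rfl,
    show (![i, j, k, l] : Fin 4 → Fin n) 2 = k from rfl,
    show (![i, j, k, l] : Fin 4 → Fin n) 3 = l from rfl]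
  ring

theorem rhs_linear {n : ℕ} (A : Fin n → Fin n → ℝ) (hA : ∀ i j, A i j = A j i) (u v : Fin n → ℝ)
    (c ρ s t x : ℝ) (V W : Fin n → ℝ) (z : UpperIdx n → ℝ) :
    ∑ i, ∑ j, A i j * (c * x * (u i * v j + v i * u j)
      + c * (V i * u j + u i * V j + (ρ * V i + s * W i) * v j + v i * (ρ * V j + s * W j))
      + c * t * goeMatrix z i j) =
    (2 * c * ∑ i, ∑ j, A i j * (u i * v j)) * x
    + ∑ k, (2 * c * ((∑ l, A k l * u l) + ρ * ∑ l, A k l * v l)) * V k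
    + ∑ k, (2 * c * s * ∑ l, A k l * v l) * W k
    + ∑ p : UpperIdx n, (c * t * ((if p.1.1 = p.1.2 then 1 else 2) * A p.1.1 p.1.2)) * z p := by
  have e1 : ∑ p : UpperIdx n, (c * t * ((if p.1.1 = p.1.2 then 1 else 2) * A p.1.1 p.1.2)) * z p
      = c * t * ∑ i, ∑ j, A i j * goeMatrix z i j := by
    rw [sum_goe A hA, Finset.mul_sum]
    exact Finset.sum_congr rfl fun p _ => by ring
  have e2 : ∑ k, (2 * c * s * ∑ l, A k l * v l) * W k =
      c * s * ∑ i, ∑ j, A i j * (W i * v j) + c * s * ∑ i, ∑ j, A i j * (v i * W j) := by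
    rw [bilin_symm A hA v W, bilin_right]
    simp only [Finset.mul_sum (Finset.univ) _ (c * s), ← Finset.sum_add_distrib]
    exact Finset.sum_congr rfl fun p _ => by ring
  have e3 : ∑ k, (2 * c * ((∑ l, A k l * u l) + ρ * ∑ l, A k l * v l)) * V k =
      c * ∑ i, ∑ j, A i j * (V i * u j) + c * ∑ i, ∑ j, A i j * (u i * V j)
      + (c * ρ * ∑ i, ∑ j, A i j * (V i * v j) + c * ρ * ∑ i, ∑ j, A i j * (v i * V j)) := by
    rw [bilin_symm A hA v V, bilin_symm A hA u V, bilin_right, bilin_right]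
    simp only [Finset.mul_sum (Finset.univ) _ (c * ρ), Finset.mul_sum (Finset.univ) _ c,
      ← Finset.sum_add_distrib]
    exact Finset.sum_congr rfl fun p _ => by ring
  have e4 : (2 * c * ∑ i, ∑ j, A i j * (u i * v j)) * x =
      c * x * ∑ i, ∑ j, A i j * (u i * v j) + c * x * ∑ i, ∑ j, A i j * (v i * u j) := by
    rw [bilin_symm A hA v u]; ring
  rw [e1, e2, e3, e4]
  simp only [Finset.mul_sum, ← Finset.sum_add_distrib]
  refine Finset.sum_congr rfl fun i _ => Finset.sum_congr rfl fun j _ => ?_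
  ring

theorem rhs_quad {n : ℕ} (A : Fin n → Fin n → ℝ) (hA : ∀ i j, A i j = A j i) (u v : Fin n → ℝ)
    (c ρ s t : ℝ) (hc : c ^ 2 = 1 / 6) (hs : s ^ 2 = 1 - ρ ^ 2) (ht : t ^ 2 = 1 + ρ ^ 2) :
    (2 * c * ∑ i, ∑ j, A i j * (u i * v j)) ^ 2
    + ∑ k, (2 * c * ((∑ l, A k l * u l) + ρ * ∑ l, A k l * v l)) ^ 2
    + ∑ k, (2 * c * s * ∑ l, A k l * v l) ^ 2
    + ∑ p : UpperIdx n, (if p.1.1 = p.1.2 then 2 else 1) *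
        (c * t * ((if p.1.1 = p.1.2 then 1 else 2) * A p.1.1 p.1.2)) ^ 2 =
    (1 / 6) * (2 * (1 + ρ ^ 2) * ∑ i, ∑ j, A i j ^ 2
      + 4 * (∑ i, ∑ j, A i j * (u i * v j)) ^ 2
      + 4 * ∑ i, (∑ k, A i k * u k) ^ 2 + 4 * ∑ i, (∑ k, A i k * v k) ^ 2
      + 8 * ρ * ∑ i, (∑ k, A i k * u k) * (∑ k, A i k * v k)) := by
  have e1 : ∑ p : UpperIdx n, (if p.1.1 = p.1.2 then (2 : ℝ) else 1) *
        (c * t * ((if p.1.1 = p.1.2 then 1 else 2) * A p.1.1 p.1.2)) ^ 2 =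
      (1 / 6) * (2 * (1 + ρ ^ 2) * ∑ i, ∑ j, A i j ^ 2) := by
    rw [sum_upper (fun i j => A i j ^ 2) (fun i j => by rw [hA i j]), Finset.mul_sum,
      Finset.mul_sum, ← hc, ← ht]
    refine Finset.sum_congr rfl fun p _ => ?_
    split_ifs <;> ring
  have e2 : ∑ k, (2 * c * ((∑ l, A k l * u l) + ρ * ∑ l, A k l * v l)) ^ 2
    + ∑ k, (2 * c * s * ∑ l, A k l * v l) ^ 2 =
      (1 / 6) * (4 * ∑ i, (∑ k, A i k * u k) ^ 2 + 4 * ∑ i, (∑ k, A i k * v k) ^ 2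
      + 8 * ρ * ∑ i, (∑ k, A i k * u k) * (∑ k, A i k * v k)) := by
    rw [← hc]
    rw [Finset.mul_sum (Finset.univ) _ (4 : ℝ), Finset.mul_sum (Finset.univ) _ (4 : ℝ),
      Finset.mul_sum (Finset.univ) _ (8 * ρ), ← Finset.sum_add_distrib, ← Finset.sum_add_distrib,
      ← Finset.sum_add_distrib, Finset.mul_sum (Finset.univ) _ (c ^ 2)]
    refine Finset.sum_congr rfl fun k _ => ?_
    linear_combination 4 * c ^ 2 * (∑ l, A k l * v l) ^ 2 * hs
  rw [e1, add_assoc ((2 * c * ∑ i, ∑ j, A i j * (u i * v j)) ^ 2), e2]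
  linear_combination 4 * (∑ i, ∑ j, A i j * (u i * v j)) ^ 2 * hc

theorem gauss_one (c : ℝ) :
    ∫ x : ℝ, Complex.exp (((c * x : ℝ) : ℂ) * Complex.I) ∂(gaussianReal 0 1) =
    Complex.exp (-(((c ^ 2 : ℝ) : ℂ) / 2)) := by
  have := charFun_apply_real (μ := gaussianReal 0 1) c
  rw [charFun_gaussianReal] at this
  push_cast
  rw [← this]
  simp

theorem goeMatrix_measurable {n : ℕ} (i j : Fin n) :
    Measurable (fun z : UpperIdx n → ℝ => goeMatrix z i j) := by
  unfold goeMatrix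
  split_ifs <;> fun_prop

theorem prod_gauss {n : ℕ} (α : ℝ) (β γ : Fin n → ℝ) (δ : UpperIdx n → ℝ) :
    ∫ a : ℝ × ((Fin n → ℝ) × (Fin n → ℝ)) × (UpperIdx n → ℝ),
      Complex.exp (((α * a.1 + ∑ k, β k * a.2.1.1 k + ∑ k, γ k * a.2.1.2 k
        + ∑ p, δ p * a.2.2 p : ℝ) : ℂ) * Complex.I)
      ∂((gaussianReal 0 1).prod
            (((Measure.pi fun _ : Fin n => gaussianReal 0 1).prod
                (Measure.pi fun _ : Fin n => gaussianReal 0 1)).prod (goeMeasure n))) =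
    Complex.exp (-(((α ^ 2 + ∑ k, β k ^ 2 + ∑ k, γ k ^ 2
      + ∑ p : UpperIdx n, (if p.1.1 = p.1.2 then 2 else 1) * δ p ^ 2 : ℝ) : ℂ) / 2)) := by
  obtain ⟨f₁, h₁⟩ : ∃ f : ℝ → ℂ, f = fun x =>
    Complex.exp (((α * x : ℝ) : ℂ) * Complex.I) := ⟨_, rfl⟩
  obtain ⟨f₂, h₂⟩ : ∃ f : (Fin n → ℝ) → ℂ, f = fun x =>
    Complex.exp (((∑ k, β k * x k : ℝ) : ℂ) * Complex.I) := ⟨_, rfl⟩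
  obtain ⟨f₃, h₃⟩ : ∃ f : (Fin n → ℝ) → ℂ, f = fun x =>
    Complex.exp (((∑ k, γ k * x k : ℝ) : ℂ) * Complex.I) := ⟨_, rfl⟩
  obtain ⟨f₄, h₄⟩ : ∃ f : (UpperIdx n → ℝ) → ℂ, f = fun x =>
    Complex.exp (((∑ k, δ k * x k : ℝ) : ℂ) * Complex.I) := ⟨_, rfl⟩
  have h : ∀ a : ℝ × ((Fin n → ℝ) × (Fin n → ℝ)) × (UpperIdx n → ℝ),
      Complex.exp (((α * a.1 + ∑ k, β k * a.2.1.1 k + ∑ k, γ k * a.2.1.2 k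
        + ∑ p, δ p * a.2.2 p : ℝ) : ℂ) * Complex.I) =
      f₁ a.1 * ((f₂ a.2.1.1 * f₃ a.2.1.2) * f₄ a.2.2) := by
    intro a
    simp only [h₁, h₂, h₃, h₄, ← Complex.exp_add]
    congr 1
    push_cast
    ring
  rw [integral_congr_ae (ae_of_all _ h)]
  have : SFinite (goeMeasure n) := by unfold goeMeasure; infer_instance
  refine (integral_prod_mul f₁ (fun b : ((Fin n → ℝ) × (Fin n → ℝ)) × (UpperIdx n → ℝ) =>
    (f₂ b.1.1 * f₃ b.1.2) * f₄ b.2)).trans ?_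
  refine (congrArg _ (integral_prod_mul (fun d : (Fin n → ℝ) × (Fin n → ℝ) => f₂ d.1 * f₃ d.2)
    f₄)).trans ?_
  rw [integral_prod_mul f₂ f₃, h₁, h₂, h₃, h₄, gauss_one, pi_gauss, pi_gauss]
  unfold goeMeasure
  rw [pi_gauss]
  simp only [← Complex.exp_add]
  congr 1
  have : ∀ p : UpperIdx n, (((if p.1.1 = p.1.2 then 2 else 1 : NNReal)) : ℝ) =
    (if p.1.1 = p.1.2 then 2 else 1 : ℝ) := by intro p; split_ifs <;> simp
  simp only [this, NNReal.coe_one, one_mul]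
  push_cast
  ring

/-- **Low-rank representation of a mixed contraction of GOTE(4,n).**
With `ρ = ⟨u,v⟩`, the mixed contraction `G·u⊗v` has the same law as
`(1/√6)·U(uvᵀ + vuᵀ) + (1/√6)(V₁uᵀ + uV₁ᵀ + V₂vᵀ + vV₂ᵀ) + (1/√6)√(1+ρ²)·Z`,
where `U` is a standard Gaussian, `V₁, W` are independent standard Gaussian vectors,
`V₂ = ρV₁ + √(1−ρ²)W`, and `Z` is a GOE(n) matrix, all mutually independent. -/
theorem mixed_contraction_low_rank_representation
    (n : ℕ) (hn : 1 ≤ n) (u v : Fin n → ℝ)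
    (hu : ∑ i, u i ^ 2 = 1) (hv : ∑ i, v i ^ 2 = 1) :
    Measure.map (fun ω => fun i j => mixedContraction ω u v i j) (goteMeasure 4 n)
      = Measure.map
          (fun a : ℝ × ((Fin n → ℝ) × (Fin n → ℝ)) × (UpperIdx n → ℝ) => fun i j =>
            (1 / Real.sqrt 6) * a.1 * (u i * v j + v i * u j)
              + (1 / Real.sqrt 6) *
                  (a.2.1.1 i * u j + u i * a.2.1.1 j
                    + ((∑ k, u k * v k) * a.2.1.1 i
                        + Real.sqrt (1 - (∑ k, u k * v k) ^ 2) * a.2.1.2 i) * v j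
                    + v i * ((∑ k, u k * v k) * a.2.1.1 j
                        + Real.sqrt (1 - (∑ k, u k * v k) ^ 2) * a.2.1.2 j))
              + (1 / Real.sqrt 6) * Real.sqrt (1 + (∑ k, u k * v k) ^ 2) * goeMatrix a.2.2 i j)
          ((gaussianReal 0 1).prod
            (((Measure.pi fun _ : Fin n => gaussianReal 0 1).prod
                (Measure.pi fun _ : Fin n => gaussianReal 0 1)).prod (goeMeasure n))) := by
  have hρ1 : (∑ k, u k * v k) ^ 2 ≤ 1 := by
    have := Finset.sum_mul_sq_le_sq_mul_sq Finset.univ u v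
    rwa [hu, hv, mul_one] at this
  have hc : (1 / Real.sqrt 6) ^ 2 = 1 / 6 := by
    rw [div_pow, Real.sq_sqrt (by norm_num)]; norm_num
  have hs := Real.sq_sqrt (sub_nonneg.2 hρ1)
  have ht := Real.sq_sqrt (show 0 ≤ 1 + (∑ k, u k * v k) ^ 2 by positivity)
  have hm1 : Measurable (fun ω : GoteSpace 4 n => fun i j => mixedContraction ω u v i j) := by
    refine measurable_pi_iff.2 fun i => measurable_pi_iff.2 fun j => ?_
    simp only [mixed_apply, gote]
    fun_prop
  have hlhs : ∀ (A : Fin n → Fin n → ℝ), (∀ i j, A i j = A j i) →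
      ∑ m : Sym (Fin n) 4, (∑ x : Fin 4 → Fin n, if tupleSym x = m then
        (A (x 0) (x 1) * u (x 2) * v (x 3)) * Real.sqrt (((4 : ℕ) : ℝ) / (permCount x : ℝ))
          else 0) ^ 2 = _ := fun A hA =>
    (gote_var (fun x => A (x 0) (x 1) * u (x 2) * v (x 3))).trans
      (congrArg (fun t => (1 / 6) * t) (lhs_quad A hA u v hu hv _ (fun _ => rfl)))
  generalize (∑ k, u k * v k) = ρ at hρ1 hs ht hlhs ⊢
  generalize 1 / Real.sqrt 6 = c at hc ⊢
  generalize Real.sqrt (1 - ρ ^ 2) = s at hs ⊢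
  generalize Real.sqrt (1 + ρ ^ 2) = t at ht ⊢
  have hm2 : Measurable (fun a : ℝ × ((Fin n → ℝ) × (Fin n → ℝ)) × (UpperIdx n → ℝ) =>
      fun i j => c * a.1 * (u i * v j + v i * u j)
        + c * (a.2.1.1 i * u j + u i * a.2.1.1 j + (ρ * a.2.1.1 i + s * a.2.1.2 i) * v j
          + v i * (ρ * a.2.1.1 j + s * a.2.1.2 j)) + c * t * goeMatrix a.2.2 i j) := by
    refine measurable_pi_iff.2 fun i => measurable_pi_iff.2 fun j => ?_
    have := (goeMatrix_measurable i j).comp (measurable_snd.comp measurable_snd :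
      Measurable (fun a : ℝ × ((Fin n → ℝ) × (Fin n → ℝ)) × (UpperIdx n → ℝ) => a.2.2))
    refine Measurable.add ?_ (this.const_mul (c * t))
    fun_prop
  have : IsProbabilityMeasure (goeMeasure n) := by unfold goeMeasure; infer_instance
  have := Measure.isProbabilityMeasure_map (μ := goteMeasure 4 n) hm1.aemeasurable
  have := Measure.isProbabilityMeasure_map (μ := ((gaussianReal 0 1).prod
            (((Measure.pi fun _ : Fin n => gaussianReal 0 1).prod
                (Measure.pi fun _ : Fin n => gaussianReal 0 1)).prod (goeMeasure n))))
                hm2.aemeasurable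
  apply Measure.ext_of_charFunDual
  funext L
  rw [charFunDual_apply, charFunDual_apply,
    integral_map hm1.aemeasurable (by fun_prop), integral_map hm2.aemeasurable (by fun_prop)]
  let A : Fin n → Fin n → ℝ := fun i j =>
    (L (Pi.single i (Pi.single j 1)) + L (Pi.single j (Pi.single i 1))) / 2
  have hA : ∀ i j, A i j = A j i := fun i j => by simp only [A]; ring
  have hL : ∀ M : Fin n → Fin n → ℝ, (∀ i j, M i j = M j i) → L M = ∑ i, ∑ j, A i j * M i j := by
    intro M hM
    rw [dual_eq_sum L M, sum_symmetrize _ M hM]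
  have hX : ∀ ω : GoteSpace 4 n, L (fun i j => mixedContraction ω u v i j) = _ := fun ω =>
    (hL _ (fun i j => mixed_symm ω u v i j)).trans (mixed_linear A u v ω)
  have hY : ∀ a : ℝ × ((Fin n → ℝ) × (Fin n → ℝ)) × (UpperIdx n → ℝ),
      L (fun i j => c * a.1 * (u i * v j + v i * u j)
        + c * (a.2.1.1 i * u j + u i * a.2.1.1 j + (ρ * a.2.1.1 i + s * a.2.1.2 i) * v j
          + v i * (ρ * a.2.1.1 j + s * a.2.1.2 j)) + c * t * goeMatrix a.2.2 i j) = _ := fun a =>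
    (hL _ (fun i j => by rw [goeMatrix_symm a.2.2 i j]; ring)).trans
      (rhs_linear A hA u v c ρ s t a.1 a.2.1.1 a.2.1.2 a.2.2)
  simp_rw [hX, hY]
  rw [prod_gauss]
  unfold goteMeasure
  rw [pi_gauss]
  simp only [NNReal.coe_one, one_mul]
  rw [hlhs A hA, rhs_quad A hA u v c ρ s t hc hs ht]
end
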